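/- Let k ∈ (0,1). For every n ∈ ℕ, Kuznetsov's moment integrals satisfy the two recurrence relations I_{n+2}^+ = 2n(2n+3)(1−2k²) I_{n+1}^+ + Σ_{j=0}^{n} [2·C(2n+3, 2j+3) − C(2n+4, 2j+4)] I_{j+2}^+ I_{n−j}^+ and I_{n+2}^+ = −2(1−2k²) I_{n+1}^+ + 12 Σ_{j=0}^{n} C(2n+2, 2j) I_j^+ Σ_{l=0}^{n−j} C(2n−2j+1, 2l) I_l^+ I_{n−j−l}^+, where C(a,b) denotes the binomial coefficient. -/

import Mathlib

/-!
Substituting `x = y²` shows that, for `X = K` and `Y = K'`, the number `(-1)^n I_n^+` is the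
`(2n+1)`-st derivative at `0` of the odd function
`G(u) = ∫₀^∞ (sin (u y) / (cos (X y) + cosh (Y y)) + sinh (u y) / (cosh (X y) + cos (Y y))) dy`,
which is holomorphic for `|Re u| < X`, `|Im u| < Y`. The theorem follows from
`G'' = 2 G³ + 2 (1 - 2 k²) G` and `G'(0) = 1`.

For arbitrary `X, Y > 0`, expanding the weights in exponentials turns `G''` into an alternating
double series, which is `℘'(u - X) - ℘'(u - i Y)` for the lattice `2 X ℤ + 2 i Y ℤ`. Integrating,
`G' = ℘(u - X) - ℘(u - i Y)`: both sides vanish at `u = (X - i Y) / 2`. The equations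
`℘'² = 4 ℘³ - g₂ ℘ - g₃` and `℘'' = 6 ℘² - g₂ / 2` show that the quotient of
`℘'(u - X) + ℘'(u - i Y) - 2 G G'` by `G'` has derivative zero. As it vanishes at `0`,
`℘(u - X) + ℘(u - i Y) - G²` is constant, whence `G'' = 2 G³ + 2 A G` and
`G'² = G⁴ + 2 A G² + m²` with `m = G'(0)`.

On `[0, X)` the function `G` increases from `0` to `∞`, so `X = ∫₀^∞ dx / √(x⁴ + 2 A x² + m²)`.
Exchanging `X` and `Y` replaces `A` by `-A`. On the other hand,
`K = ∫₀^∞ dx / √(x⁴ + 2 a x² + 1)` with `a = 1 - 2 k²`, and `K'` is the same integral with `-a`.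
Since these integrals decrease strictly in the middle coefficient, `A = a` and `m = 1`.

The second recurrence is the Leibniz rule at `0` for the cube in the differential equation. The
first one needs only `I_0^+ = 1` and `I_1^+ = -2 a`: its coefficients extend to those of an
antisymmetric convolution, whose sum vanishes.
-/

open MeasureTheory Real

/-- The complete elliptic integral of the first kind `K(k)`. -/
noncomputable def ellipticK (k : ℝ) : ℝ :=
  ∫ θ in (0 : ℝ)..(π / 2), (1 - k ^ 2 * Real.sin θ ^ 2) ^ (-(1 / 2) : ℝ)

/-- Kuznetsov's moment integral `I_n^+`, realizing
`(1/2)∫_ℝ x^n dx/(cos(√x K) + cosh(√x K'))` with `√x = i√(−x)` for `x < 0`. -/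
noncomputable def Iplus (k : ℝ) (n : ℕ) : ℝ :=
  (1 / 2) * (∫ x in Set.Ioi (0 : ℝ), x ^ n /
      (Real.cos (ellipticK k * Real.sqrt x) +
        Real.cosh (ellipticK (Real.sqrt (1 - k ^ 2)) * Real.sqrt x)))
  + ((-1 : ℝ) ^ n / 2) * (∫ x in Set.Ioi (0 : ℝ), x ^ n /
      (Real.cosh (ellipticK k * Real.sqrt x) +
        Real.cos (ellipticK (Real.sqrt (1 - k ^ 2)) * Real.sqrt x)))

/-- Kuznetsov's moment integral `I_n^−`, realizing
`∫_ℝ x^{n+1} dx/(cos(√x K) − cosh(√x K'))` with `√x = i√(−x)` for `x < 0`. -/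
noncomputable def Iminus (k : ℝ) (n : ℕ) : ℝ :=
  (∫ x in Set.Ioi (0 : ℝ), x ^ (n + 1) /
      (Real.cos (ellipticK k * Real.sqrt x) -
        Real.cosh (ellipticK (Real.sqrt (1 - k ^ 2)) * Real.sqrt x)))
  + (-1 : ℝ) ^ (n + 1) * (∫ x in Set.Ioi (0 : ℝ), x ^ (n + 1) /
      (Real.cosh (ellipticK k * Real.sqrt x) -
        Real.cos (ellipticK (Real.sqrt (1 - k ^ 2)) * Real.sqrt x)))

open Set Filter Topology ProbabilityTheory Asymptotics
open scoped Nat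

/-! ### Laplace transforms of exponential series -/

theorem Iio_subset_integrableExpSet_Ioi :
    Iio 0 ⊆ integrableExpSet id (volume.restrict (Ioi (0 : ℝ))) :=
  fun _ ht => integrableOn_exp_mul_Ioi ht 0

theorem mem_interior_integrableExpSet_Ioi {t : ℝ} (ht : t < 0) :
    t ∈ interior (integrableExpSet id (volume.restrict (Ioi (0 : ℝ)))) :=
  interior_mono Iio_subset_integrableExpSet_Ioi (by rwa [interior_Iio])

theorem integrableOn_pow_mul_cexp_Ioi (n : ℕ) {z : ℂ} (hz : z.re < 0) :
    IntegrableOn (fun y : ℝ => (y : ℂ) ^ n * Complex.exp (z * y)) (Ioi 0) :=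
  integrable_pow_mul_cexp_of_re_mem_interior_integrableExpSet
    (mem_interior_integrableExpSet_Ioi hz) n

theorem hasDerivAt_factorial_div_neg_pow (n : ℕ) {z : ℂ} (hz : z ≠ 0) :
    HasDerivAt (fun w : ℂ => (n ! : ℂ) / (-w) ^ (n + 1)) ((n + 1)! / (-z) ^ (n + 2)) z := by
  have hz' : -z ≠ 0 := neg_ne_zero.mpr hz
  have hpow : HasDerivAt (fun w : ℂ => (-w) ^ (n + 1)) (((n + 1 : ℕ) : ℂ) * (-z) ^ n * (-1)) z := by
    simpa using (hasDerivAt_neg z).fun_pow (n + 1)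
  refine ((hasDerivAt_const z (n ! : ℂ)).fun_div hpow (pow_ne_zero _ hz')).congr_deriv ?_
  rw [Nat.factorial_succ]
  push_cast
  generalize -z = w at hz' ⊢
  field_simp
  ring

theorem integral_pow_mul_cexp_Ioi (n : ℕ) {z : ℂ} (hz : z.re < 0) :
    ∫ y in Ioi (0 : ℝ), (y : ℂ) ^ n * Complex.exp (z * y) = n ! / (-z) ^ (n + 1) := by
  induction n generalizing z with
  | zero => simp [integral_exp_mul_complex_Ioi hz 0, neg_div, div_neg]
  | succ n ih =>
    have hz₀ : z ≠ 0 := by rintro rfl; simp at hz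
    refine (hasDerivAt_integral_pow_mul_exp (mem_interior_integrableExpSet_Ioi hz) n).unique
      ((hasDerivAt_factorial_div_neg_pow n hz₀).congr_of_eventuallyEq ?_)
    filter_upwards [(Complex.continuous_re.isOpen_preimage _ isOpen_Iio).mem_nhds hz] with w hw
    exact ih hw

theorem norm_pow_mul_cexp (n : ℕ) (z : ℂ) {y : ℝ} (hy : 0 ≤ y) :
    ‖(y : ℂ) ^ n * Complex.exp (z * y)‖ = y ^ n * exp (z.re * y) := by
  simp [Complex.norm_exp, abs_of_nonneg hy]

theorem integral_pow_mul_exp_Ioi (n : ℕ) {t : ℝ} (ht : t < 0) :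
    ∫ y in Ioi (0 : ℝ), y ^ n * exp (t * y) = n ! / (-t) ^ (n + 1) := by
  have h := integral_pow_mul_cexp_Ioi n (z := t) (by simpa using ht)
  rw [← Complex.ofReal_inj, ← integral_complex_ofReal]
  exact_mod_cast h

theorem integral_norm_pow_mul_cexp_Ioi (n : ℕ) {z : ℂ} (hz : z.re < 0) :
    ∫ y in Ioi (0 : ℝ), ‖(y : ℂ) ^ n * Complex.exp (z * y)‖ = n ! / (-z.re) ^ (n + 1) := by
  rw [← integral_pow_mul_exp_Ioi n hz]
  exact setIntegral_congr_fun measurableSet_Ioi fun y hy => norm_pow_mul_cexp n z (mem_Ioi.mp hy).le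

theorem hasSum_integral_pow_mul_of_hasSum_cexp {ι : Type*} [Countable ι] {c s : ι → ℂ}
    {f : ℝ → ℂ} (n : ℕ) (hs : ∀ i, (s i).re < 0)
    (hsum : Summable fun i => ‖c i‖ * (n ! / (-(s i).re) ^ (n + 1)))
    (hf : ∀ y : ℝ, 0 < y → HasSum (fun i => c i * Complex.exp (s i * y)) (f y)) :
    HasSum (fun i => c i * (n ! / (-s i) ^ (n + 1))) (∫ y in Ioi (0 : ℝ), (y : ℂ) ^ n * f y) := by
  have hint : ∀ i, ∫ y in Ioi (0 : ℝ), c i * ((y : ℂ) ^ n * Complex.exp (s i * y)) =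
      c i * (n ! / (-s i) ^ (n + 1)) := fun i => by
    rw [integral_const_mul, integral_pow_mul_cexp_Ioi n (hs i)]
  have hnorm : ∀ i, ∫ y in Ioi (0 : ℝ), ‖c i * ((y : ℂ) ^ n * Complex.exp (s i * y))‖ =
      ‖c i‖ * (n ! / (-(s i).re) ^ (n + 1)) := fun i => by
    simp_rw [norm_mul (c i), integral_const_mul]
    rw [integral_norm_pow_mul_cexp_Ioi n (hs i)]
  have key := hasSum_integral_of_summable_integral_norm
    (fun i => (integrableOn_pow_mul_cexp_Ioi n (hs i)).const_mul (c i)) (by simpa only [hnorm])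
  simp only [hint] at key
  suffices h : EqOn (fun y : ℝ => (y : ℂ) ^ n * f y)
      (fun y => ∑' i, c i * ((y : ℂ) ^ n * Complex.exp (s i * y))) (Ioi 0) by
    rwa [setIntegral_congr_fun measurableSet_Ioi h]
  intro y hy
  dsimp only
  rw [← ((hf y hy).mul_left ((y : ℂ) ^ n)).tsum_eq]
  exact tsum_congr fun i => by ring

theorem hasSum_inv_cosh {z : ℂ} (hz : 0 < z.re) :
    HasSum (fun j : ℕ => 2 * (-1) ^ j * Complex.exp (-((2 * j + 1) * z))) (Complex.cosh z)⁻¹ := by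
  have hnorm : ‖-Complex.exp (-(2 * z))‖ < 1 := by
    simpa [Complex.norm_exp] using hz
  have hfactor : 1 - -Complex.exp (-(2 * z)) = 2 * Complex.exp (-z) * Complex.cosh z := by
    rw [Complex.cosh, show -(2 * z) = -z + -z by ring, Complex.exp_add, Complex.exp_neg]
    field_simp
    ring
  have hgeom := (hasSum_geometric_of_norm_lt_one hnorm).mul_left (2 * Complex.exp (-z))
  rw [hfactor, mul_inv, mul_inv_cancel_left₀ (by simp)] at hgeom
  convert! hgeom using 2 with j
  rw [show -((2 * j + 1) * z) = j * -(2 * z) + -z by ring, Complex.exp_add, Complex.exp_nat_mul,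
    neg_pow (Complex.exp _)]
  ring

theorem hasSum_integral_pow_mul_inv_cosh {n : ℕ} (hn : n ≠ 0) {z : ℂ} (hz : 0 < z.re) :
    HasSum (fun j : ℕ => 2 * (-1) ^ j * (n ! / ((2 * j + 1) * z) ^ (n + 1)))
      (∫ y in Ioi (0 : ℝ), (y : ℂ) ^ n * (Complex.cosh (z * y))⁻¹) := by
  have hre : ∀ j : ℕ, (-((2 * j + 1) * z)).re = -((2 * (j : ℝ) + 1) * z.re) := fun j => by simp
  have hsummable : Summable fun j : ℕ => 1 / ((j : ℝ) + 1) ^ (n + 1) := by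
    simpa using (summable_nat_add_iff 1).mpr
      (Real.summable_one_div_nat_pow (p := n + 1).mpr (by lia))
  have key := hasSum_integral_pow_mul_of_hasSum_cexp (c := fun j : ℕ => 2 * (-1) ^ j)
    (s := fun j => -((2 * j + 1) * z)) (f := fun y => (Complex.cosh (z * y))⁻¹) n
    (fun j => by rw [hre, neg_lt_zero]; positivity) ?_ ?_
  · simpa only [neg_neg] using key
  · refine Summable.of_nonneg_of_le (fun j => ?_) (fun j => ?_)
      (hsummable.mul_left (2 * n ! / z.re ^ (n + 1)))
    · rw [hre, neg_neg]; positivity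
    · rw [hre, neg_neg, div_mul_div_comm, mul_one, ← mul_pow, ← mul_div_assoc, mul_comm z.re]
      simp only [norm_mul, norm_pow, norm_neg, norm_one, one_pow, mul_one, Complex.norm_ofNat]
      gcongr
      linarith [Nat.cast_nonneg (α := ℝ) j]
  · intro y hy
    convert! hasSum_inv_cosh (z := z * y) (by simpa using mul_pos hz hy) using 4 with j
    ring

theorem integral_pow_mul_inv_cosh {n : ℕ} (hn : n ≠ 0) {z : ℂ} (hz : 0 < z.re) :
    ∫ y in Ioi (0 : ℝ), (y : ℂ) ^ n * (Complex.cosh (z * y))⁻¹ =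
      (∫ y in Ioi (0 : ℝ), (y : ℂ) ^ n * (Complex.cosh y)⁻¹) / z ^ (n + 1) := by
  have hone := (hasSum_integral_pow_mul_inv_cosh hn (z := 1) (by simp)).div_const (z ^ (n + 1))
  simp only [one_mul, mul_one] at hone
  refine (hasSum_integral_pow_mul_inv_cosh hn hz).unique (hone.congr_fun fun j => ?_)
  rw [mul_pow, mul_div_assoc, div_div]

/-! ### The weight and its Laplace transform -/

/-- The weight `1 / (cos (X y) + cosh (Y y))` whose moments are Kuznetsov's integrals. -/
noncomputable def kuznetsovWeight (X Y y : ℝ) : ℝ := 1 / (cos (X * y) + cosh (Y * y))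

theorem cos_add_cosh_eq_two_mul_cosh_mul_cosh (x y : ℂ) :
    Complex.cos x + Complex.cosh y =
      2 * Complex.cosh ((y - Complex.I * x) / 2) * Complex.cosh ((y + Complex.I * x) / 2) := by
  have hsub := Complex.cosh_sub ((y + Complex.I * x) / 2) ((y - Complex.I * x) / 2)
  have hadd := Complex.cosh_add ((y + Complex.I * x) / 2) ((y - Complex.I * x) / 2)
  rw [show (y + Complex.I * x) / 2 - (y - Complex.I * x) / 2 = x * Complex.I by ring,
    Complex.cosh_mul_I] at hsub
  rw [show (y + Complex.I * x) / 2 + (y - Complex.I * x) / 2 = y by ring] at hadd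
  rw [hsub, hadd]
  ring

theorem kuznetsovWeight_neg_left (X Y y : ℝ) :
    kuznetsovWeight (-X) Y y = kuznetsovWeight X Y y := by
  simp [kuznetsovWeight]

theorem ofReal_kuznetsovWeight (X Y y : ℝ) :
    (kuznetsovWeight X Y y : ℂ) =
      (Complex.cosh ((Y - Complex.I * X) / 2 * y))⁻¹ *
        (Complex.cosh ((Y + Complex.I * X) / 2 * y))⁻¹ / 2 := by
  have h := cos_add_cosh_eq_two_mul_cosh_mul_cosh (X * y) (Y * y)
  rw [kuznetsovWeight]
  push_cast
  rw [h, one_div, mul_inv, mul_inv, div_eq_inv_mul, ← mul_assoc]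
  ring_nf

section Weight

variable (X : ℝ) {Y : ℝ}

theorem cos_mul_add_cosh_mul_pos (hY : Y ≠ 0) (y : ℝ) : 0 < cos (X * y) + cosh (Y * y) := by
  rcases eq_or_ne y 0 with rfl | hy
  · simp
  · linarith [one_lt_cosh.mpr (mul_ne_zero hY hy), neg_one_le_cos (X * y)]

theorem kuznetsovWeight_pos (hY : Y ≠ 0) (y : ℝ) : 0 < kuznetsovWeight X Y y :=
  one_div_pos.mpr (cos_mul_add_cosh_mul_pos X hY y)

theorem continuous_kuznetsovWeight (hY : Y ≠ 0) : Continuous (kuznetsovWeight X Y) :=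
  continuous_const.div (by fun_prop) fun y => (cos_mul_add_cosh_mul_pos X hY y).ne'

theorem kuznetsovWeight_isBigO_exp_neg (hY : 0 < Y) :
    kuznetsovWeight X Y =O[atTop] fun y => exp (-Y * y) := by
  have hlarge : ∀ᶠ y : ℝ in atTop, 4 ≤ exp (Y * y) :=
    (tendsto_exp_atTop.comp (tendsto_id.const_mul_atTop hY)).eventually_ge_atTop 4
  refine IsBigO.of_bound 4 (hlarge.mono fun y hy => ?_)
  have hden : exp (Y * y) / 4 ≤ cos (X * y) + cosh (Y * y) := by
    rw [cosh_eq]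
    linarith [neg_one_le_cos (X * y), exp_pos (-(Y * y))]
  rw [norm_of_nonneg (kuznetsovWeight_pos X hY.ne' y).le, norm_of_nonneg (exp_pos _).le, neg_mul,
    exp_neg, ← div_eq_mul_inv]
  calc kuznetsovWeight X Y y ≤ 1 / (exp (Y * y) / 4) := by
        unfold kuznetsovWeight; gcongr
    _ = 4 / exp (Y * y) := by rw [one_div_div]

theorem exp_neg_div_two_le_kuznetsovWeight (hY : 0 < Y) {y : ℝ} (hy : 0 ≤ y) :
    exp (-Y * y) / 2 ≤ kuznetsovWeight X Y y := by
  have hle : cos (X * y) + cosh (Y * y) ≤ 2 * exp (Y * y) := by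
    rw [cosh_eq]
    linarith [cos_le_one (X * y), one_le_exp (mul_nonneg hY.le hy),
      exp_le_one_iff.mpr (neg_nonpos.mpr (mul_nonneg hY.le hy))]
  calc exp (-Y * y) / 2 = 1 / (2 * exp (Y * y)) := by rw [neg_mul, exp_neg]; field_simp
    _ ≤ kuznetsovWeight X Y y :=
      one_div_le_one_div_of_le (cos_mul_add_cosh_mul_pos X hY.ne' y) hle

theorem integrableOn_exp_mul_kuznetsovWeight {t : ℝ} (hY : 0 < Y) (ht : t < Y) :
    IntegrableOn (fun y => exp (t * y) * kuznetsovWeight X Y y) (Ioi 0) := by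
  refine integrable_of_isBigO_exp_neg (sub_pos.mpr ht) ?_ ?_
  · exact ((by fun_prop : Continuous fun y => exp (t * y)).mul
      (continuous_kuznetsovWeight X hY.ne')).continuousOn
  · refine ((isBigO_refl _ _).mul (kuznetsovWeight_isBigO_exp_neg X hY)).congr_right fun y => ?_
    rw [← exp_add]
    ring_nf

/-- The measure `dy / (cos (X y) + cosh (Y y))` on the positive half-line, so that the theory of
moment generating functions applies to Kuznetsov's integrals. -/
noncomputable def kuznetsovMeasure (X Y : ℝ) : Measure ℝ :=
  (volume.restrict (Ioi 0)).withDensity fun y => ENNReal.ofReal (kuznetsovWeight X Y y)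

theorem integral_kuznetsovMeasure {E : Type*} [NormedAddCommGroup E] [NormedSpace ℝ E]
    (hY : Y ≠ 0) (f : ℝ → E) :
    ∫ y, f y ∂kuznetsovMeasure X Y = ∫ y in Ioi 0, kuznetsovWeight X Y y • f y := by
  rw [kuznetsovMeasure, integral_withDensity_eq_integral_toReal_smul
    (continuous_kuznetsovWeight X hY).measurable.ennreal_ofReal (by simp)]
  simp only [ENNReal.toReal_ofReal (kuznetsovWeight_pos X hY _).le]

theorem integrable_kuznetsovMeasure_iff {E : Type*} [NormedAddCommGroup E] [NormedSpace ℝ E]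
    (hY : Y ≠ 0) {f : ℝ → E} :
    Integrable f (kuznetsovMeasure X Y) ↔
      IntegrableOn (fun y => kuznetsovWeight X Y y • f y) (Ioi 0) := by
  rw [kuznetsovMeasure, integrable_withDensity_iff_integrable_smul'
    (continuous_kuznetsovWeight X hY).measurable.ennreal_ofReal (by simp), IntegrableOn]
  simp only [ENNReal.toReal_ofReal (kuznetsovWeight_pos X hY _).le]

theorem mem_interior_integrableExpSet_kuznetsovMeasure (hY : 0 < Y) {t : ℝ} (ht : t < Y) :
    t ∈ interior (integrableExpSet id (kuznetsovMeasure X Y)) := by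
  refine mem_interior.mpr ⟨Iio Y, fun s hs => ?_, isOpen_Iio, ht⟩
  refine (integrable_kuznetsovMeasure_iff X hY.ne').mpr ?_
  simpa only [smul_eq_mul, mul_comm] using! integrableOn_exp_mul_kuznetsovWeight X hY hs

theorem ae_pos_kuznetsovMeasure (X Y : ℝ) : ∀ᵐ y ∂kuznetsovMeasure X Y, 0 < y :=
  (withDensity_absolutelyContinuous _ _).ae_le (ae_restrict_mem measurableSet_Ioi)

theorem isFiniteMeasure_kuznetsovMeasure (hY : 0 < Y) : IsFiniteMeasure (kuznetsovMeasure X Y) := by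
  have h := integrable_pow_of_mem_interior_integrableExpSet
    (mem_interior_integrableExpSet_kuznetsovMeasure X hY hY) 0
  simp only [pow_zero] at h
  exact (integrable_const_iff_isFiniteMeasure one_ne_zero).mp h

end Weight

/-- The moments `∫₀^∞ y^n / (cos (X y) + cosh (Y y)) dy`. -/
noncomputable def kuznetsovMoment (X Y : ℝ) (n : ℕ) : ℝ := ∫ y, y ^ n ∂kuznetsovMeasure X Y

theorem kuznetsovMoment_pos (X : ℝ) {Y : ℝ} (hY : 0 < Y) (n : ℕ) : 0 < kuznetsovMoment X Y n := by
  have hint : Integrable (fun y : ℝ => y ^ n) (kuznetsovMeasure X Y) :=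
    integrable_pow_of_mem_interior_integrableExpSet
      (mem_interior_integrableExpSet_kuznetsovMeasure X hY hY) n
  have hpos : ∀ y ∈ Ioi (0 : ℝ), 0 < kuznetsovWeight X Y y • y ^ n := fun y hy =>
    mul_pos (kuznetsovWeight_pos X hY.ne' y) (pow_pos hy n)
  rw [kuznetsovMoment, integral_kuznetsovMeasure X hY.ne', setIntegral_pos_iff_support_of_nonneg_ae
    ((ae_restrict_mem measurableSet_Ioi).mono fun y hy => (hpos y hy).le)
    ((integrable_kuznetsovMeasure_iff X hY.ne').mp hint),
    inter_eq_right.mpr fun y hy => Function.mem_support.mpr (hpos y hy).ne']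
  simp

/-- The `n`-th derivative `∫₀^∞ y^n exp (z y) / (cos (X y) + cosh (Y y)) dy` of the complex moment
generating function of `kuznetsovMeasure X Y`. -/
noncomputable def laplaceMoment (X Y : ℝ) (n : ℕ) (z : ℂ) : ℂ :=
  ∫ y, (y : ℂ) ^ n * Complex.exp (z * y) ∂kuznetsovMeasure X Y

theorem laplaceMoment_neg_left (X Y : ℝ) : laplaceMoment (-X) Y = laplaceMoment X Y := by
  simp only [funext_iff, laplaceMoment, kuznetsovMeasure, kuznetsovWeight_neg_left, implies_true]

theorem conj_laplaceMoment (X Y : ℝ) (n : ℕ) (z : ℂ) :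
    (starRingEnd ℂ) (laplaceMoment X Y n z) = laplaceMoment X Y n ((starRingEnd ℂ) z) := by
  simp [laplaceMoment, ← integral_conj, ← Complex.exp_conj]

theorem laplaceMoment_zero (X Y : ℝ) (n : ℕ) : laplaceMoment X Y n 0 = kuznetsovMoment X Y n := by
  rw [laplaceMoment, kuznetsovMoment, ← integral_complex_ofReal]
  simp

section LaplaceMoment

variable (X : ℝ) {Y : ℝ} (hY : 0 < Y)
include hY

theorem laplaceMoment_eq_setIntegral (n : ℕ) (z : ℂ) :
    laplaceMoment X Y n z =
      ∫ y in Ioi (0 : ℝ), (y : ℂ) ^ n * (kuznetsovWeight X Y y * Complex.exp (z * y)) := by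
  rw [laplaceMoment, integral_kuznetsovMeasure X hY.ne']
  simp only [Complex.real_smul, mul_left_comm]

theorem integrable_pow_mul_cexp_kuznetsovMeasure (n : ℕ) {z : ℂ} (hz : z.re < Y) :
    Integrable (fun y : ℝ => (y : ℂ) ^ n * Complex.exp (z * y)) (kuznetsovMeasure X Y) :=
  integrable_pow_mul_cexp_of_re_mem_interior_integrableExpSet
    (mem_interior_integrableExpSet_kuznetsovMeasure X hY hz) n

theorem hasDerivAt_laplaceMoment (n : ℕ) {z : ℂ} (hz : z.re < Y) :
    HasDerivAt (laplaceMoment X Y n) (laplaceMoment X Y (n + 1) z) z :=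
  hasDerivAt_integral_pow_mul_exp (mem_interior_integrableExpSet_kuznetsovMeasure X hY hz) n

theorem one_div_le_re_laplaceMoment_zero {t : ℝ} (ht : t < Y) :
    1 / (2 * (Y - t)) ≤ (laplaceMoment X Y 0 t).re := by
  have hre : (laplaceMoment X Y 0 t).re =
      ∫ y in Ioi (0 : ℝ), exp (t * y) * kuznetsovWeight X Y y := by
    rw [laplaceMoment_eq_setIntegral X hY, ← Complex.ofReal_re (∫ _ in _, _),
      ← integral_complex_ofReal]
    simp [mul_comm]
  have hneg : -(Y - t) < 0 := by linarith
  have hexp : ∫ y in Ioi (0 : ℝ), exp (-(Y - t) * y) / 2 = 1 / (2 * (Y - t)) := by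
    rw [integral_div, integral_exp_mul_Ioi hneg, mul_zero, exp_zero, neg_div_neg_eq, div_div,
      mul_comm]
  rw [hre, ← hexp]
  refine setIntegral_mono_on ((integrableOn_exp_mul_Ioi hneg 0).div_const 2)
    (integrableOn_exp_mul_kuznetsovWeight X hY ht) measurableSet_Ioi fun y hy => ?_
  calc exp (-(Y - t) * y) / 2 = exp (t * y) * (exp (-Y * y) / 2) := by
        rw [← mul_div_assoc, ← exp_add]; ring_nf
    _ ≤ exp (t * y) * kuznetsovWeight X Y y := by
        gcongr; exact exp_neg_div_two_le_kuznetsovWeight X hY (mem_Ioi.mp hy).le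

theorem norm_laplaceMoment_zero_le {z : ℂ} (hz : z.re ≤ 0) :
    ‖laplaceMoment X Y 0 z‖ ≤ (kuznetsovMeasure X Y).real univ := by
  have := isFiniteMeasure_kuznetsovMeasure X hY
  rw [← one_mul ((kuznetsovMeasure X Y).real univ)]
  refine norm_integral_le_of_norm_le_const ((ae_pos_kuznetsovMeasure X Y).mono fun y hy => ?_)
  rw [norm_pow_mul_cexp 0 z hy.le, pow_zero, one_mul]
  exact exp_le_one_iff.mpr (mul_nonpos_of_nonpos_of_nonneg hz hy.le)

/-- The factor `cosh (v y)` of the weight, `v = (Y + i X) / 2`, cancels in the symmetrisation. -/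
theorem laplaceMoment_add_laplaceMoment_neg (n : ℕ) {v : ℂ}
    (hv : v = (Y + Complex.I * X) / 2) :
    laplaceMoment X Y n v + laplaceMoment X Y n (-v) =
      ∫ y in Ioi (0 : ℝ), (y : ℂ) ^ n * (Complex.cosh ((Y - Complex.I * X) / 2 * y))⁻¹ := by
  have hre : v.re = Y / 2 := by simp [hv]
  rw [laplaceMoment, laplaceMoment,
    ← integral_add (integrable_pow_mul_cexp_kuznetsovMeasure X hY n (by linarith))
      (integrable_pow_mul_cexp_kuznetsovMeasure X hY n (by rw [Complex.neg_re]; linarith)),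
    integral_kuznetsovMeasure X hY.ne']
  refine integral_congr_ae (.of_forall fun y => ?_)
  have hcosh : Complex.cosh (v * y) ≠ 0 := by
    intro h
    have := (kuznetsovWeight_pos X hY.ne' y).ne'
    rw [← Complex.ofReal_ne_zero, ofReal_kuznetsovWeight, ← hv, h] at this
    simp at this
  have hsum : Complex.exp (v * y) + Complex.exp (-v * y) = 2 * Complex.cosh (v * y) := by
    rw [Complex.cosh, neg_mul]; ring
  dsimp only
  rw [← mul_add, hsum, Complex.real_smul, ofReal_kuznetsovWeight, ← hv]
  generalize Complex.cosh (v * y) = c at hcosh ⊢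
  field_simp

end LaplaceMoment

theorem summable_one_div_add_add_one_pow {k : ℕ} (hk : 2 < k) :
    Summable fun p : ℕ × ℕ => 1 / ((p.1 : ℝ) + p.2 + 1) ^ k := by
  have hk' : (1 : ℝ) < k / 2 := by
    rw [lt_div_iff₀ two_pos]; exact_mod_cast hk
  have hone : Summable fun j : ℕ => 1 / ((j : ℝ) + 1) ^ (k / 2 : ℝ) := by
    simpa using (summable_nat_add_iff 1).mpr (Real.summable_one_div_nat_rpow.mpr hk')
  refine Summable.of_nonneg_of_le (fun p => by positivity) (fun p => ?_)
    (hone.mul_of_nonneg hone (fun j => by positivity) (fun j => by positivity))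
  rw [one_div_mul_one_div, ← mul_rpow (by positivity) (by positivity)]
  gcongr
  calc (((p.1 : ℝ) + 1) * (p.2 + 1)) ^ (k / 2 : ℝ)
      ≤ (((p.1 : ℝ) + p.2 + 1) ^ (2 : ℝ)) ^ (k / 2 : ℝ) := by
        gcongr
        rw [rpow_two]
        nlinarith [Nat.cast_nonneg (α := ℝ) p.1, Nat.cast_nonneg (α := ℝ) p.2,
          mul_nonneg (Nat.cast_nonneg (α := ℝ) p.1) (Nat.cast_nonneg (α := ℝ) p.2)]
    _ = ((p.1 : ℝ) + p.2 + 1) ^ k := by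
        rw [← rpow_mul (by positivity), mul_div_cancel₀ _ two_ne_zero, rpow_natCast]

section Series

variable (X : ℝ) {Y : ℝ} (hY : 0 < Y)
include hY

theorem hasSum_kuznetsovWeight {y : ℝ} (hy : 0 < y) :
    HasSum (fun p : ℕ × ℕ => 2 * (-1) ^ (p.1 + p.2) *
      Complex.exp (-((p.1 + p.2 + 1) * Y - Complex.I * (p.1 - p.2) * X) * y))
      (kuznetsovWeight X Y y : ℂ) := by
  have hre : 0 < Y / 2 * y := by positivity
  have hsub := hasSum_inv_cosh (z := (Y - Complex.I * X) / 2 * y) (by simpa using hre)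
  have hadd := hasSum_inv_cosh (z := (Y + Complex.I * X) / 2 * y) (by simpa using hre)
  have hsummable := summable_mul_of_summable_norm hsub.summable.norm hadd.summable.norm
  rw [ofReal_kuznetsovWeight]
  refine ((hsub.mul hadd hsummable).div_const 2).congr_fun fun p => ?_
  rw [mul_mul_mul_comm, ← Complex.exp_add, pow_add]
  ring_nf

theorem exists_pos_mul_le_frequency_sub {t : ℝ} (ht : t < Y) :
    ∃ c : ℝ, 0 < c ∧ ∀ x : ℝ, 0 ≤ x → c * (x + 1) ≤ (x + 1) * Y - t := by
  refine ⟨min Y (Y - t), lt_min hY (sub_pos.mpr ht), fun x hx => ?_⟩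
  linarith [mul_le_mul_of_nonneg_right (min_le_left Y (Y - t)) hx, min_le_right Y (Y - t)]

theorem hasSum_laplaceMoment {n : ℕ} (hn : 2 ≤ n) {z : ℂ} (hz : z.re < Y) :
    HasSum (fun p : ℕ × ℕ => 2 * (-1) ^ (p.1 + p.2) *
      (n ! / ((p.1 + p.2 + 1) * Y - Complex.I * (p.1 - p.2) * X - z) ^ (n + 1)))
      (laplaceMoment X Y n z) := by
  obtain ⟨c, hc, hcle⟩ := exists_pos_mul_le_frequency_sub hY hz
  set s : ℕ × ℕ → ℂ := fun p => z - ((p.1 + p.2 + 1) * Y - Complex.I * (p.1 - p.2) * X) with hs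
  have hre : ∀ p, c * ((p.1 : ℝ) + p.2 + 1) ≤ -(s p).re := fun p => by
    simpa [hs] using hcle (p.1 + p.2) (by positivity)
  have hneg : ∀ p, (s p).re < 0 := fun p => by
    have : 0 < c * ((p.1 : ℝ) + p.2 + 1) := by positivity
    linarith [hre p]
  rw [laplaceMoment_eq_setIntegral X hY]
  refine (hasSum_integral_pow_mul_of_hasSum_cexp (c := fun p => 2 * (-1) ^ (p.1 + p.2)) (s := s) n
    hneg ?_ fun y hy => ?_).congr_fun fun p => by rw [hs, neg_sub]
  · refine Summable.of_nonneg_of_le (fun p => ?_) (fun p => ?_)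
      ((summable_one_div_add_add_one_pow (k := n + 1) (by lia)).mul_left (2 * n ! / c ^ (n + 1)))
    · have := (neg_pos.mpr (hneg p)).le
      positivity
    · rw [div_mul_div_comm, mul_one, ← mul_pow, ← mul_div_assoc]
      simp only [norm_mul, norm_pow, norm_neg, norm_one, one_pow, mul_one, Complex.norm_ofNat]
      gcongr
      exact hre p
  · refine ((hasSum_kuznetsovWeight X hY hy).mul_right (Complex.exp (z * y))).congr_fun fun p => ?_
    rw [mul_assoc (2 * _), ← Complex.exp_add, hs]
    ring_nf

end Series

/-! ### The generating function and its lattice expansion -/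

/-- The `n`-th derivative of `u ↦ laplaceMoment X Y 0 (ζ u) / ζ`. -/
noncomputable def rotatedLaplace (X Y : ℝ) (ζ : ℂ) (n : ℕ) (u : ℂ) : ℂ :=
  ζ ^ n / ζ * laplaceMoment X Y n (ζ * u)

/-- The `n`-th derivative of the generating function
`G(u) = ∫₀^∞ (sin (u y) / (cos (X y) + cosh (Y y)) + sinh (u y) / (cosh (X y) + cos (Y y))) dy`,
with `sin` and `sinh` split into exponentials. -/
noncomputable def generatingDeriv (X Y : ℝ) (n : ℕ) (u : ℂ) : ℂ :=
  (rotatedLaplace X Y Complex.I n u + rotatedLaplace Y X (-1) n u +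
    (rotatedLaplace X Y (-Complex.I) n u + rotatedLaplace Y X 1 n u)) / 2

theorem hasDerivAt_rotatedLaplace (X : ℝ) {Y : ℝ} (hY : 0 < Y) (ζ : ℂ) (n : ℕ) {u : ℂ}
    (hu : (ζ * u).re < Y) :
    HasDerivAt (rotatedLaplace X Y ζ n) (rotatedLaplace X Y ζ (n + 1) u) u := by
  have hcomp : HasDerivAt (fun u => laplaceMoment X Y n (ζ * u))
      (laplaceMoment X Y (n + 1) (ζ * u) * ζ) u :=
    (hasDerivAt_laplaceMoment X hY n hu).comp u (hasDerivAt_const_mul ζ)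
  refine (hcomp.const_mul (ζ ^ n / ζ)).congr_deriv ?_
  rw [rotatedLaplace, pow_succ]
  ring

/-- The open rectangle `|Re u| < X`, `|Im u| < Y` on which the generating function converges. -/
def rectangle (X Y : ℝ) : Set ℂ := Ioo (-X) X ×ℂ Ioo (-Y) Y

theorem isOpen_rectangle (X Y : ℝ) : IsOpen (rectangle X Y) := isOpen_Ioo.reProdIm isOpen_Ioo

theorem convex_rectangle (X Y : ℝ) : Convex ℝ (rectangle X Y) :=
  ((convex_Ioo _ _).linear_preimage Complex.reLm).inter
    ((convex_Ioo _ _).linear_preimage Complex.imLm)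

/-- The summand of the alternating series over the points `(b - a) X - i (a + b + 1) Y` which
represents the second derivative of the generating function. -/
noncomputable def alternatingTerm (X Y : ℝ) (u : ℂ) (p : ℤ × ℤ) : ℂ :=
  2 * (-1) ^ (p.1 + p.2) / (u + (p.1 - p.2) * X + Complex.I * (p.1 + p.2 + 1) * Y) ^ 3

section HasSum

variable {M : Type*} [AddCommMonoid M] [TopologicalSpace M] [ContinuousAdd M]

theorem hasSum_of_isCompl_range {α β γ : Type*} {f : γ → M} {g : α → γ} {h : β → γ} {a b : M}
    (hg : Function.Injective g) (hh : Function.Injective h) (hgh : IsCompl (range g) (range h))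
    (ha : HasSum (f ∘ g) a) (hb : HasSum (f ∘ h) b) : HasSum f (a + b) :=
  (hg.hasSum_range_iff.mpr ha).add_isCompl hgh (hh.hasSum_range_iff.mpr hb)

theorem hasSum_int_prod_of_nat {α : Type*} {f : ℤ × α → M} {a b : M}
    (ha : HasSum (fun p : ℕ × α => f (p.1, p.2)) a)
    (hb : HasSum (fun p : ℕ × α => f (-1 - p.1, p.2)) b) : HasSum f (a + b) := by
  refine hasSum_of_isCompl_range (g := fun p : ℕ × α => ((p.1 : ℤ), p.2))
    (h := fun p : ℕ × α => (-1 - (p.1 : ℤ), p.2)) ?_ ?_ (isCompl_iff.mpr ⟨?_, ?_⟩) ha hb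
  · rintro ⟨m, x⟩ ⟨n, y⟩ h
    simpa using h
  · rintro ⟨m, x⟩ ⟨n, y⟩ h
    simpa using h
  · refine disjoint_left.mpr ?_
    rintro _ ⟨⟨m, x⟩, rfl⟩ ⟨⟨n, y⟩, h⟩
    have := congrArg Prod.fst h
    lia
  · refine codisjoint_iff_le_sup.mpr ?_
    rintro ⟨m, x⟩ -
    rcases le_or_gt 0 m with hm | hm
    · exact .inl ⟨(m.toNat, x), by ext1 <;> simp [hm]⟩
    · exact .inr ⟨((-1 - m).toNat, x), by ext1 <;> simp; lia⟩

theorem hasSum_int_prod_int_of_nat {f : ℤ × ℤ → M} {a b c d : M}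
    (ha : HasSum (fun p : ℕ × ℕ => f (p.1, p.2)) a)
    (hb : HasSum (fun p : ℕ × ℕ => f (p.1, -1 - p.2)) b)
    (hc : HasSum (fun p : ℕ × ℕ => f (-1 - p.1, -1 - p.2)) c)
    (hd : HasSum (fun p : ℕ × ℕ => f (-1 - p.1, p.2)) d) : HasSum f (a + b + (c + d)) := by
  have swap : ∀ {g : ℕ × ℤ → M} {x y : M}, HasSum (fun p : ℕ × ℕ => g (p.1, p.2)) x →
      HasSum (fun p : ℕ × ℕ => g (p.1, -1 - p.2)) y → HasSum g (x + y) := fun {g x y} hx hy =>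
    (Equiv.prodComm ℤ ℕ).hasSum_iff.mp <| hasSum_int_prod_of_nat
      ((Equiv.prodComm ℕ ℕ).hasSum_iff.mpr hx) ((Equiv.prodComm ℕ ℕ).hasSum_iff.mpr hy)
  rw [add_comm c]
  exact hasSum_int_prod_of_nat (swap ha hb) (swap hd hc)

end HasSum

theorem hasSum_rotatedLaplace_two (X : ℝ) {Y : ℝ} (hY : 0 < Y) {ζ u : ℂ} (hζ : ζ ^ 4 = 1)
    (hu : (ζ * u).re < Y) :
    HasSum (fun p : ℕ × ℕ => -2 * ζ ^ 2 * (-1) ^ (p.1 + p.2) /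
      (u - ((p.1 + p.2 + 1) * Y - Complex.I * (p.1 - p.2) * X) / ζ) ^ 3)
      (rotatedLaplace X Y ζ 2 u / 2) := by
  have hζ0 : ζ ≠ 0 := by rintro rfl; simp at hζ
  refine (((hasSum_laplaceMoment X hY le_rfl hu).mul_left (ζ ^ 2 / ζ)).div_const 2).congr_fun
    fun p => ?_
  set w : ℂ := (p.1 + p.2 + 1) * Y - Complex.I * (p.1 - p.2) * X
  have hw : (w - ζ * u) ^ (2 + 1) = -ζ ^ 3 * (u - w / ζ) ^ 3 := by field_simp; ring
  rw [hw, Nat.factorial_two]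
  generalize (u - w / ζ) ^ 3 = d
  push_cast
  field_simp
  rw [hζ]

theorem neg_one_zpow_neg_one_sub (n : ℤ) : (-1 : ℂ) ^ (-1 - n) = -(-1) ^ n := by
  rw [← neg_add', zpow_neg, ← inv_zpow, inv_neg_one, zpow_add₀ (by simp), zpow_one, neg_one_mul]

/-- The four quadrants of `ℤ × ℤ` correspond to the four exponentials in the generating function. -/
theorem hasSum_alternatingTerm_generatingDeriv {X Y : ℝ} (hX : 0 < X) (hY : 0 < Y) {u : ℂ}
    (hu : u ∈ rectangle X Y) : HasSum (alternatingTerm X Y u) (generatingDeriv X Y 2 u) := by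
  obtain ⟨⟨hre, hre'⟩, him, him'⟩ := hu
  have neg_swap : rotatedLaplace Y X = rotatedLaplace (-Y) X := by
    unfold rotatedLaplace; rw [laplaceMoment_neg_left]
  rw [generatingDeriv, add_div, add_div, add_div, neg_swap]
  refine hasSum_int_prod_int_of_nat
    ((hasSum_rotatedLaplace_two X hY Complex.I_pow_four (by simp; linarith)).congr_fun
      fun p => ?_)
    ((hasSum_rotatedLaplace_two (-Y) hX (by norm_num) (by simp; linarith)).congr_fun
      fun p => ?_)
    ((hasSum_rotatedLaplace_two X hY (by rw [Even.neg_pow ⟨2, rfl⟩, Complex.I_pow_four])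
      (by simp; linarith)).congr_fun fun p => ?_)
    ((hasSum_rotatedLaplace_two (-Y) hX (one_pow 4) (by simpa)).congr_fun fun p => ?_)
  all_goals
    rw [alternatingTerm]
    refine congrArg₂ (· / · ^ 3) ?_ ?_
    · simp [zpow_add₀, pow_add, neg_one_zpow_neg_one_sub]
    · push_cast
      grind [Complex.I_sq]

/-! ### Weierstrass functions -/

theorem isPreconnected_compl_lattice (L : PeriodPair) : IsPreconnected (L.latticeᶜ : Set ℂ) := by
  have hcount : (L.lattice : Set ℂ).Countable :=
    countable_coe_iff.mp (L.latticeEquivProd.toEquiv.countable_iff.mpr inferInstance)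
  exact (hcount.isConnected_compl_of_one_lt_rank (by simp)).isPreconnected

theorem eqOn_of_hasDerivAt {𝕜 : Type*} [RCLike 𝕜] {U : Set 𝕜} (hU : IsOpen U)
    (hUc : IsPreconnected U) {f g f' : 𝕜 → 𝕜} (hf : ∀ u ∈ U, HasDerivAt f (f' u) u)
    (hg : ∀ u ∈ U, HasDerivAt g (f' u) u) {z : 𝕜} (hz : z ∈ U) (hfg : f z = g z) :
    EqOn f g U :=
  hU.eqOn_of_deriv_eq hUc (fun u hu => (hf u hu).differentiableAt.differentiableWithinAt)
    (fun u hu => (hg u hu).differentiableAt.differentiableWithinAt)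
    (fun u hu => (hf u hu).deriv.trans (hg u hu).deriv.symm) hz hfg

theorem hasDerivAt_weierstrassP (L : PeriodPair) {z : ℂ} (hz : z ∉ L.lattice) :
    HasDerivAt L.weierstrassP (L.derivWeierstrassP z) z := by
  rw [← L.deriv_weierstrassP]
  exact (L.analyticOnNhd_weierstrassP z hz).differentiableAt.hasDerivAt

theorem not_eqOn_derivWeierstrassP_zero (L : PeriodPair) :
    ¬ EqOn L.derivWeierstrassP 0 (L.latticeᶜ : Set ℂ) := by
  intro hzero
  have hω : L.ω₁ / 2 ∈ (L.latticeᶜ : Set ℂ) := L.ω₁_div_two_notMem_lattice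
  have hconst : EqOn L.weierstrassP (fun _ => L.weierstrassP (L.ω₁ / 2)) (L.latticeᶜ : Set ℂ) :=
    eqOn_of_hasDerivAt L.isClosed_lattice.isOpen_compl (isPreconnected_compl_lattice L)
      (fun u hu => hasDerivAt_weierstrassP L hu)
      (fun u hu => by rw [hzero hu]; exact hasDerivAt_const u _) hω rfl
  have hnear : L.weierstrassP =ᶠ[𝓝[≠] 0] fun _ => L.weierstrassP (L.ω₁ / 2) := by
    filter_upwards [nhdsWithin_le_nhds (L.compl_lattice_sdiff_singleton_mem_nhds 0),
      self_mem_nhdsWithin] with w hw hw0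
    exact hconst fun hl => hw ⟨hl, hw0⟩
  have horder := L.order_weierstrassP 0 (zero_mem _)
  rw [meromorphicOrderAt_congr hnear, meromorphicOrderAt_const] at horder
  split_ifs at horder <;> exact absurd horder (by decide)

/-- Differentiating the first-order equation gives the second-order one multiplied by `℘'`. -/
theorem hasDerivAt_derivWeierstrassP (L : PeriodPair) {z : ℂ} (hz : z ∉ L.lattice) :
    HasDerivAt L.derivWeierstrassP (6 * L.weierstrassP z ^ 2 - L.g₂ / 2) z := by
  set U : Set ℂ := L.latticeᶜ
  have hU : IsOpen U := L.isClosed_lattice.isOpen_compl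
  have hderiv : ∀ w ∈ U, HasDerivAt L.derivWeierstrassP (deriv L.derivWeierstrassP w) w :=
    fun w hw => (L.analyticOnNhd_derivWeierstrassP w hw).differentiableAt.hasDerivAt
  have hmul : ∀ w ∈ U, L.derivWeierstrassP w *
      (deriv L.derivWeierstrassP w - (6 * L.weierstrassP w ^ 2 - L.g₂ / 2)) = 0 := fun w hw => by
    have hP := hasDerivAt_weierstrassP L hw
    have hcubic := (((hP.fun_pow 3).const_mul 4).fun_sub (hP.const_mul L.g₂)).sub_const L.g₃
    have hsq := hcubic.congr_of_eventuallyEq (f₁ := fun w => L.derivWeierstrassP w ^ 2) <|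
      eventuallyEq_of_mem (hU.mem_nhds hw) L.derivWeierstrassP_sq
    have := ((hderiv w hw).fun_pow 2).unique hsq
    push_cast at this
    linear_combination this / 2
  have hanalytic : AnalyticOnNhd ℂ (fun w => deriv L.derivWeierstrassP w -
      (6 * L.weierstrassP w ^ 2 - L.g₂ / 2)) U := fun w hw =>
    (L.analyticOnNhd_derivWeierstrassP w hw).deriv.sub
      ((analyticAt_const.mul ((L.analyticOnNhd_weierstrassP w hw).pow 2)).sub analyticAt_const)
  have hzero := (L.analyticOnNhd_derivWeierstrassP.eq_zero_or_eq_zero_of_mul_eq_zero hanalytic hmul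
    (isPreconnected_compl_lattice L)).resolve_left (not_eqOn_derivWeierstrassP_zero L) z hz
  rw [← sub_eq_zero.mp hzero]
  exact hderiv z hz

/-- `P` satisfies Weierstrass' equation `P' ^ 2 = 4 P ^ 3 - g₂ P - g₃` on `U`, together with its
differentiated form; the latter is not implied by the former when `P` is constant. -/
structure IsWeierstrassPair (g₂ g₃ : ℂ) (U : Set ℂ) (P P' : ℂ → ℂ) : Prop where
  hasDerivAt : ∀ u ∈ U, HasDerivAt P (P' u) u
  hasDerivAt_deriv : ∀ u ∈ U, HasDerivAt P' (6 * P u ^ 2 - g₂ / 2) u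
  deriv_sq : ∀ u ∈ U, P' u ^ 2 = 4 * P u ^ 3 - g₂ * P u - g₃

theorem isWeierstrassPair_weierstrassP (L : PeriodPair) {U : Set ℂ} {c : ℂ}
    (hU : ∀ u ∈ U, u - c ∉ L.lattice) :
    IsWeierstrassPair L.g₂ L.g₃ U (fun u => L.weierstrassP (u - c))
      (fun u => L.derivWeierstrassP (u - c)) where
  hasDerivAt u hu := (hasDerivAt_weierstrassP L (hU u hu)).comp_sub_const u c
  hasDerivAt_deriv u hu := (hasDerivAt_derivWeierstrassP L (hU u hu)).comp_sub_const u c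
  deriv_sq u hu := L.derivWeierstrassP_sq _ (hU u hu)

/-- The hypothesis says that `f / h` has derivative zero wherever `h ≠ 0`. -/
theorem eqOn_zero_of_wronskian_eq_zero {U : Set ℂ} (hU : IsOpen U) (hUc : IsPreconnected U)
    {f f' h h' : ℂ → ℂ} (hf : ∀ u ∈ U, HasDerivAt f (f' u) u)
    (hh : ∀ u ∈ U, HasDerivAt h (h' u) u) (hW : ∀ u ∈ U, f' u * h u = f u * h' u) {z : ℂ}
    (hz : z ∈ U) (hfz : f z = 0) (hhz : h z ≠ 0) : EqOn f 0 U := by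
  obtain ⟨r, hr, hball⟩ := Metric.mem_nhds_iff.mp
    (inter_mem (hU.mem_nhds hz) ((hh z hz).continuousAt.eventually_ne hhz))
  have hquot : EqOn (fun u => f u / h u) (fun _ => 0) (Metric.ball z r) := by
    refine eqOn_of_hasDerivAt Metric.isOpen_ball (convex_ball z r).isPreconnected
      (f' := fun _ => 0) (fun u hu => ?_) (fun u _ => hasDerivAt_const u 0)
      (Metric.mem_ball_self hr) (by simp [hfz])
    obtain ⟨huU, huh⟩ := hball hu
    exact ((hf u huU).fun_div (hh u huU) huh).congr_deriv (by rw [hW u huU, sub_self, zero_div])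
  have hanalytic : AnalyticOnNhd ℂ f U := DifferentiableOn.analyticOnNhd
    (fun u hu => (hf u hu).differentiableAt.differentiableWithinAt) hU
  refine hanalytic.eqOn_zero_of_preconnected_of_eventuallyEq_zero hUc hz ?_
  filter_upwards [Metric.ball_mem_nhds z hr] with u hu
  exact (div_eq_zero_iff.mp (hquot hu)).resolve_right (hball hu).2

namespace IsWeierstrassPair

variable {g₂ g₃ z : ℂ} {U : Set ℂ} {P P' Q Q' G : ℂ → ℂ}

theorem deriv_add_deriv_eq (hP : IsWeierstrassPair g₂ g₃ U P P')
    (hQ : IsWeierstrassPair g₂ g₃ U Q Q') (hU : IsOpen U) (hUc : IsPreconnected U)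
    (hG : ∀ u ∈ U, HasDerivAt G (P u - Q u) u) (hz : z ∈ U) (hGz : G z = 0) (hP'z : P' z = 0)
    (hQ'z : Q' z = 0) (hne : P z ≠ Q z) {u : ℂ} (hu : u ∈ U) :
    P' u + Q' u = 2 * G u * (P u - Q u) := by
  have hdiff : ∀ u ∈ U, HasDerivAt (fun u => P u - Q u) (P' u - Q' u) u := fun u hu =>
    (hP.hasDerivAt u hu).fun_sub (hQ.hasDerivAt u hu)
  refine sub_eq_zero.mp (eqOn_zero_of_wronskian_eq_zero hU hUc (fun u hu =>
    ((hP.hasDerivAt_deriv u hu).fun_add (hQ.hasDerivAt_deriv u hu)).fun_sub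
      (((hG u hu).const_mul 2).fun_mul (hdiff u hu)))
    hdiff (fun u hu => ?_) hz (by simp [hGz, hP'z, hQ'z]) (sub_ne_zero.mpr hne) hu)
  linear_combination hQ.deriv_sq u hu - hP.deriv_sq u hu

theorem add_eq (hP : IsWeierstrassPair g₂ g₃ U P P')
    (hQ : IsWeierstrassPair g₂ g₃ U Q Q') (hU : IsOpen U) (hUc : IsPreconnected U)
    (hG : ∀ u ∈ U, HasDerivAt G (P u - Q u) u) (hz : z ∈ U) (hGz : G z = 0) (hP'z : P' z = 0)
    (hQ'z : Q' z = 0) (hne : P z ≠ Q z) {u : ℂ} (hu : u ∈ U) :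
    P u + Q u = G u ^ 2 + (P z + Q z) := by
  refine eqOn_of_hasDerivAt hU hUc
    (fun u hu => (hP.hasDerivAt u hu).fun_add (hQ.hasDerivAt u hu))
    (fun u hu => (((hG u hu).fun_pow 2).add_const _).congr_deriv ?_) hz (by simp [hGz]) hu
  rw [deriv_add_deriv_eq hP hQ hU hUc hG hz hGz hP'z hQ'z hne hu]
  push_cast
  ring

theorem deriv_sub_deriv_eq (hP : IsWeierstrassPair g₂ g₃ U P P')
    (hQ : IsWeierstrassPair g₂ g₃ U Q Q') (hU : IsOpen U) (hUc : IsPreconnected U)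
    (hG : ∀ u ∈ U, HasDerivAt G (P u - Q u) u) (hz : z ∈ U) (hGz : G z = 0) (hP'z : P' z = 0)
    (hQ'z : Q' z = 0) (hne : P z ≠ Q z) {u : ℂ} (hu : u ∈ U) :
    P' u - Q' u = 2 * G u ^ 3 + 2 * (3 * (P z + Q z)) * G u := by
  refine eqOn_of_hasDerivAt hU hUc
    (fun u hu => (hP.hasDerivAt_deriv u hu).fun_sub (hQ.hasDerivAt_deriv u hu))
    (fun u hu => ((((hG u hu).fun_pow 3).const_mul 2).fun_add
      ((hG u hu).const_mul _)).congr_deriv ?_) hz (by simp [hGz, hP'z, hQ'z]) hu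
  push_cast
  linear_combination
    (-6 * (P u - Q u)) * add_eq hP hQ hU hUc hG hz hGz hP'z hQ'z hne hu

end IsWeierstrassPair

theorem derivWeierstrassP_eq_zero_of_add_self_mem (L : PeriodPair) {c : ℂ}
    (hc : c + c ∈ L.lattice) : L.derivWeierstrassP c = 0 := by
  have h := L.derivWeierstrassP_sub_coe c ⟨c + c, hc⟩
  rw [sub_add_cancel_left, L.derivWeierstrassP_neg] at h
  exact self_eq_neg.mp h.symm

theorem weierstrassP_eq_of_add_mem (L : PeriodPair) {z w : ℂ} (h : z + w ∈ L.lattice) :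
    L.weierstrassP z = L.weierstrassP w := by
  have h := L.weierstrassP_sub_coe w ⟨z + w, h⟩
  rwa [sub_add_cancel_right, L.weierstrassP_neg] at h

/-- The period lattice `2 X ℤ + 2 i Y ℤ`. -/
noncomputable def rectPeriodPair {X Y : ℝ} (hX : X ≠ 0) (hY : Y ≠ 0) : PeriodPair where
  ω₁ := 2 * X
  ω₂ := 2 * Y * Complex.I
  indep := by
    refine LinearIndependent.pair_iff.mpr fun s t h => ?_
    have hre : s * (2 * X) = 0 := by simpa using congrArg Complex.re h
    have him : t * (2 * Y) = 0 := by simpa using congrArg Complex.im h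
    exact ⟨by simpa [hX] using hre, by simpa [hY] using him⟩

section rectPeriodPair

variable {X Y : ℝ} (hX : X ≠ 0) (hY : Y ≠ 0)

theorem hasSum_derivWeierstrassP_rectPeriodPair (z : ℂ) :
    HasSum (fun p : ℤ × ℤ => -2 / (z - (p.1 * (2 * X) + p.2 * (2 * Y * Complex.I))) ^ 3)
      ((rectPeriodPair hX hY).derivWeierstrassP z) := by
  set L := rectPeriodPair hX hY
  refine ((Equiv.hasSum_iff L.latticeEquivProd.symm.toEquiv).mpr
    (L.hasSum_derivWeierstrassP z)).congr_fun fun p => ?_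
  rw [Function.comp_apply, LinearEquiv.coe_toEquiv, L.latticeEquiv_symm_apply]
  rfl

/-- The points of `ℤ × ℤ` with odd, respectively even, coordinate sum contribute one translate of
the lattice each. -/
theorem hasSum_alternatingTerm_derivWeierstrassP (u : ℂ) :
    HasSum (alternatingTerm X Y u) ((rectPeriodPair hX hY).derivWeierstrassP (u - X) -
      (rectPeriodPair hX hY).derivWeierstrassP (u - Complex.I * Y)) := by
  set L := rectPeriodPair hX hY
  have hodd : HasSum (fun p : ℤ × ℤ => alternatingTerm X Y u (-p.2 - p.1 - 1, p.1 - p.2))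
      (L.derivWeierstrassP (u - X)) := by
    refine (hasSum_derivWeierstrassP_rectPeriodPair hX hY _).congr_fun fun p => ?_
    have hsign : (-1 : ℂ) ^ (-p.2 - p.1 - 1 + (p.1 - p.2)) = -1 :=
      Odd.neg_one_zpow ⟨-p.2 - 1, by ring⟩
    simp only [alternatingTerm, hsign]
    push_cast
    congr 1 <;> ring
  have heven : HasSum (fun p : ℤ × ℤ => alternatingTerm X Y u (-p.2 - p.1 - 1, p.1 - p.2 - 1))
      (-L.derivWeierstrassP (u - Complex.I * Y)) := by
    refine (hasSum_derivWeierstrassP_rectPeriodPair hX hY _).neg.congr_fun fun p => ?_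
    have hsign : (-1 : ℂ) ^ (-p.2 - p.1 - 1 + (p.1 - p.2 - 1)) = 1 :=
      Even.neg_one_zpow ⟨-p.2 - 1, by ring⟩
    simp only [alternatingTerm, hsign]
    push_cast
    rw [← neg_div]
    congr 1 <;> ring
  rw [sub_eq_add_neg]
  refine hasSum_of_isCompl_range (g := fun p : ℤ × ℤ => (-p.2 - p.1 - 1, p.1 - p.2))
    (h := fun p : ℤ × ℤ => (-p.2 - p.1 - 1, p.1 - p.2 - 1)) ?_ ?_
    (isCompl_iff.mpr ⟨?_, ?_⟩) hodd heven
  · rintro ⟨a, b⟩ ⟨c, d⟩ h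
    grind
  · rintro ⟨a, b⟩ ⟨c, d⟩ h
    grind
  · refine disjoint_left.mpr ?_
    rintro _ ⟨⟨a, b⟩, rfl⟩ ⟨⟨c, d⟩, h⟩
    grind
  · refine codisjoint_iff_le_sup.mpr ?_
    rintro ⟨a, b⟩ -
    obtain ⟨c, h | h⟩ := Int.even_or_odd' (a + b)
    · exact .inr ⟨(b - c, -c - 1), by ext <;> grind⟩
    · exact .inl ⟨(b - c - 1, -c - 1), by ext <;> grind⟩

theorem odd_mul_notMem_Ioo (a : ℝ) (m : ℤ) : (2 * m + 1) * a ∉ Ioo (-a) a := by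
  rintro ⟨hl, hr⟩
  have ha : 0 < a := by linarith
  have hl' : (0 : ℝ) < m + 1 := by nlinarith [ha]
  have hr' : (m : ℝ) < 0 := by nlinarith [ha]
  norm_cast at hl' hr'
  lia

variable {u : ℂ}

theorem sub_ofReal_notMem_lattice (hu : u ∈ rectangle X Y) :
    u - X ∉ (rectPeriodPair hX hY).lattice := by
  rw [PeriodPair.mem_lattice]
  rintro ⟨m, n, h⟩
  have hre : m * (2 * X) = u.re - X := by simpa [rectPeriodPair] using congrArg Complex.re h
  apply odd_mul_notMem_Ioo X m
  rw [show (2 * m + 1) * X = u.re by linear_combination hre]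
  exact hu.1

theorem sub_I_mul_ofReal_notMem_lattice (hu : u ∈ rectangle X Y) :
    u - Complex.I * Y ∉ (rectPeriodPair hX hY).lattice := by
  rw [PeriodPair.mem_lattice]
  rintro ⟨m, n, h⟩
  have him : n * (2 * Y) = u.im - Y := by simpa [rectPeriodPair] using congrArg Complex.im h
  apply odd_mul_notMem_Ioo Y n
  rw [show (2 * n + 1) * Y = u.im by linear_combination him]
  exact hu.2

end rectPeriodPair

section generatingDeriv

variable {X Y : ℝ} (hX : 0 < X) (hY : 0 < Y) {u : ℂ}

include hX hY

theorem zero_mem_rectangle : (0 : ℂ) ∈ rectangle X Y := by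
  constructor <;> simpa

theorem hasDerivAt_generatingDeriv (n : ℕ) (hu : u ∈ rectangle X Y) :
    HasDerivAt (generatingDeriv X Y n) (generatingDeriv X Y (n + 1) u) u := by
  obtain ⟨⟨hre, hre'⟩, him, him'⟩ := hu
  exact (((hasDerivAt_rotatedLaplace X hY _ n (by simp; linarith)).fun_add
    (hasDerivAt_rotatedLaplace Y hX _ n (by simp; linarith))).fun_add
      ((hasDerivAt_rotatedLaplace X hY _ n (by simp; linarith)).fun_add
        (hasDerivAt_rotatedLaplace Y hX _ n (by simpa)))).div_const 2

theorem generatingDeriv_two (hu : u ∈ rectangle X Y) :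
    generatingDeriv X Y 2 u = (rectPeriodPair hX.ne' hY.ne').derivWeierstrassP (u - X) -
      (rectPeriodPair hX.ne' hY.ne').derivWeierstrassP (u - Complex.I * Y) :=
  (hasSum_alternatingTerm_generatingDeriv hX hY hu).unique
    (hasSum_alternatingTerm_derivWeierstrassP hX.ne' hY.ne' u)

theorem generatingDeriv_one_half_sub :
    generatingDeriv X Y 1 ((X - Complex.I * Y) / 2) = 0 := by
  have hXY := laplaceMoment_add_laplaceMoment_neg X hY 1 rfl
  have hYX := laplaceMoment_add_laplaceMoment_neg (-Y) hX 1 rfl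
  rw [integral_pow_mul_inv_cosh one_ne_zero (z := (Y - Complex.I * X) / 2) (by simpa)] at hXY
  rw [integral_pow_mul_inv_cosh one_ne_zero (z := (X - Complex.I * (-Y : ℝ)) / 2) (by simpa)] at hYX
  have hsq : ((Y - Complex.I * X) / 2) ^ (1 + 1) = -((X - Complex.I * (-Y : ℝ)) / 2) ^ (1 + 1) := by
    push_cast
    grind [Complex.I_sq]
  rw [hsq, div_neg] at hXY
  have hI : Complex.I * ((X - Complex.I * Y) / 2) = (Y + Complex.I * X) / 2 := by
    grind [Complex.I_sq]
  have hone : (X + Complex.I * (-Y : ℝ)) / 2 = (X - Complex.I * Y) / 2 := by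
    push_cast
    ring
  rw [laplaceMoment_neg_left, hone] at hYX
  simp only [generatingDeriv, rotatedLaplace, pow_one, neg_mul, one_mul, hI,
    div_self Complex.I_ne_zero, div_self (neg_ne_zero.mpr Complex.I_ne_zero),
    div_self (neg_ne_zero.mpr (one_ne_zero' ℂ)), div_self (one_ne_zero' ℂ)]
  linear_combination (hXY + hYX) / 2

/-- The integration constant vanishes because both sides vanish at `(X - i Y) / 2`. -/
theorem generatingDeriv_one (hu : u ∈ rectangle X Y) :
    generatingDeriv X Y 1 u = (rectPeriodPair hX.ne' hY.ne').weierstrassP (u - X) -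
      (rectPeriodPair hX.ne' hY.ne').weierstrassP (u - Complex.I * Y) := by
  set L := rectPeriodPair hX.ne' hY.ne'
  have hbase : (X - Complex.I * Y) / 2 ∈ rectangle X Y :=
    ⟨⟨by simp; linarith, by simp; linarith⟩, by simp; linarith, by simp; linarith⟩
  refine eqOn_of_hasDerivAt (isOpen_rectangle X Y) (convex_rectangle X Y).isPreconnected
    (fun w hw => hasDerivAt_generatingDeriv hX hY 1 hw)
    (g := fun w => L.weierstrassP (w - X) - L.weierstrassP (w - Complex.I * Y))
    (fun w hw => ?_) hbase ?_ hu
  · rw [generatingDeriv_two hX hY hw]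
    exact
      ((hasDerivAt_weierstrassP L (sub_ofReal_notMem_lattice _ _ hw)).comp_sub_const w _).fun_sub
      ((hasDerivAt_weierstrassP L (sub_I_mul_ofReal_notMem_lattice _ _ hw)).comp_sub_const w _)
  · rw [generatingDeriv_one_half_sub hX hY, eq_comm, sub_eq_zero]
    refine weierstrassP_eq_of_add_mem L ?_
    convert neg_mem L.ω₂_mem_lattice using 1
    change _ = -(2 * Y * Complex.I)
    ring

end generatingDeriv

/-! ### The differential equation of the generating function -/

/-- The signed combination of odd moments which becomes `I_m^+` when `X = K` and `Y = K'`. -/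
noncomputable def momentSum (X Y : ℝ) (m : ℕ) : ℝ :=
  kuznetsovMoment X Y (2 * m + 1) + (-1) ^ m * kuznetsovMoment Y X (2 * m + 1)

theorem momentSum_swap (X Y : ℝ) (m : ℕ) : momentSum Y X m = (-1) ^ m * momentSum X Y m := by
  have hsq : (-1 : ℝ) ^ m * (-1) ^ m = 1 := pow_mul_pow_eq_one m (by norm_num)
  rw [momentSum, momentSum]
  linear_combination -kuznetsovMoment Y X (2 * m + 1) * hsq

theorem generatingDeriv_even_zero (X Y : ℝ) (m : ℕ) : generatingDeriv X Y (2 * m) 0 = 0 := by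
  simp only [generatingDeriv, rotatedLaplace, mul_zero, pow_mul, neg_sq, div_neg]
  ring

theorem generatingDeriv_odd_zero (X Y : ℝ) (m : ℕ) :
    generatingDeriv X Y (2 * m + 1) 0 = (-1) ^ m * momentSum X Y m := by
  have hsq : (-1 : ℂ) ^ m * (-1) ^ m = 1 := pow_mul_pow_eq_one m (by norm_num)
  simp only [generatingDeriv, rotatedLaplace, momentSum, mul_zero, laplaceMoment_zero,
    pow_succ _ (2 * m), pow_mul, neg_sq, Complex.I_sq, one_pow, mul_neg, neg_div_neg_eq,
    mul_div_cancel_right₀ _ Complex.I_ne_zero]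
  push_cast
  linear_combination -kuznetsovMoment Y X (2 * m + 1) * hsq

theorem generatingDeriv_ofReal (X Y : ℝ) (n : ℕ) (x : ℝ) :
    generatingDeriv X Y n x = (generatingDeriv X Y n x).re := by
  rw [eq_comm, ← Complex.conj_eq_iff_re]
  simp only [generatingDeriv, rotatedLaplace, map_add, map_mul, map_pow, map_neg, map_div₀,
    conj_laplaceMoment, Complex.conj_I, Complex.conj_ofReal, map_one, map_ofNat, neg_neg]
  ring

/-- The coefficient `A` of the differential equation `G'' = 2 G ^ 3 + 2 A G` of the generating
function; it is read off from the third derivative at the origin. -/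
noncomputable def odeCoeff (X Y : ℝ) : ℝ := -momentSum X Y 1 / (2 * momentSum X Y 0)

theorem odeCoeff_swap (X Y : ℝ) : odeCoeff Y X = -odeCoeff X Y := by
  simp [odeCoeff, momentSum_swap X Y, neg_div]

section

variable {X Y : ℝ} (hX : 0 < X) (hY : 0 < Y)

include hX hY

theorem momentSum_zero_pos : 0 < momentSum X Y 0 := by
  simpa [momentSum] using add_pos (kuznetsovMoment_pos X hY 1) (kuznetsovMoment_pos Y hX 1)

theorem exists_generatingDeriv_two_eq : ∃ c : ℂ, ∀ u ∈ rectangle X Y, generatingDeriv X Y 2 u =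
    2 * generatingDeriv X Y 0 u ^ 3 + 2 * c * generatingDeriv X Y 0 u := by
  set L := rectPeriodPair hX.ne' hY.ne'
  have hzero := zero_mem_rectangle hX hY
  refine ⟨3 * (L.weierstrassP (0 - X) + L.weierstrassP (0 - Complex.I * Y)), fun u hu => ?_⟩
  rw [generatingDeriv_two hX hY hu]
  refine IsWeierstrassPair.deriv_sub_deriv_eq
    (isWeierstrassPair_weierstrassP L fun u hu => sub_ofReal_notMem_lattice _ _ hu)
    (isWeierstrassPair_weierstrassP L fun u hu => sub_I_mul_ofReal_notMem_lattice _ _ hu)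
    (isOpen_rectangle X Y) (convex_rectangle X Y).isPreconnected
    (fun u hu => ?_) hzero (generatingDeriv_even_zero X Y 0) ?_ ?_ ?_ hu
  · rw [← generatingDeriv_one hX hY hu]
    exact hasDerivAt_generatingDeriv hX hY 0 hu
  · apply derivWeierstrassP_eq_zero_of_add_self_mem
    convert neg_mem L.ω₁_mem_lattice using 1
    change _ = -(2 * X : ℂ)
    ring
  · apply derivWeierstrassP_eq_zero_of_add_self_mem
    convert neg_mem L.ω₂_mem_lattice using 1
    change _ = -(2 * Y * Complex.I)
    ring
  · rw [← sub_ne_zero, ← generatingDeriv_one hX hY hzero, generatingDeriv_odd_zero X Y 0]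
    simpa using (momentSum_zero_pos hX hY).ne'

theorem generatingDeriv_two_eq {u : ℂ} (hu : u ∈ rectangle X Y) :
    generatingDeriv X Y 2 u =
      2 * generatingDeriv X Y 0 u ^ 3 + 2 * odeCoeff X Y * generatingDeriv X Y 0 u := by
  obtain ⟨c, hc⟩ := exists_generatingDeriv_two_eq hX hY
  have hzero := zero_mem_rectangle hX hY
  have hG := hasDerivAt_generatingDeriv hX hY 0 hzero
  have hthird := (hasDerivAt_generatingDeriv hX hY 2 hzero).unique <|
    (((hG.fun_pow 3).const_mul 2).fun_add (hG.const_mul (2 * c))).congr_of_eventuallyEq <|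
      eventuallyEq_of_mem ((isOpen_rectangle X Y).mem_nhds hzero) hc
  have hm : (momentSum X Y 0 : ℂ) ≠ 0 := Complex.ofReal_ne_zero.mpr (momentSum_zero_pos hX hY).ne'
  rw [generatingDeriv_even_zero X Y 0, generatingDeriv_odd_zero X Y 0,
    generatingDeriv_odd_zero X Y 1] at hthird
  have hcoeff : c = odeCoeff X Y := by
    rw [odeCoeff]
    push_cast
    field_simp
    linear_combination -hthird
  rw [hc u hu, hcoeff]

omit hX in
theorem ofReal_mem_rectangle {x : ℝ} (hx : x ∈ Ioo (-X) X) : (x : ℂ) ∈ rectangle X Y :=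
  ⟨hx, by simpa⟩

theorem hasDerivAt_re_generatingDeriv (n : ℕ) {x : ℝ} (hx : x ∈ Ioo (-X) X) :
    HasDerivAt (fun x : ℝ => (generatingDeriv X Y n x).re) (generatingDeriv X Y (n + 1) x).re x :=
  (hasDerivAt_generatingDeriv hX hY n (ofReal_mem_rectangle hY hx)).real_of_complex

theorem re_generatingDeriv_two_eq {x : ℝ} (hx : x ∈ Ioo (-X) X) :
    (generatingDeriv X Y 2 x).re = 2 * (generatingDeriv X Y 0 x).re ^ 3 +
      2 * odeCoeff X Y * (generatingDeriv X Y 0 x).re := by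
  have h := generatingDeriv_two_eq hX hY (ofReal_mem_rectangle hY hx)
  rw [generatingDeriv_ofReal, generatingDeriv_ofReal X Y 0] at h
  exact_mod_cast h

/-- On the real axis only `∫₀^∞ exp (x y) / (cos (Y y) + cosh (X y)) dy` is unbounded as
`x → X`. -/
theorem tendsto_re_generatingDeriv_zero :
    Tendsto (fun x : ℝ => (generatingDeriv X Y 0 x).re) (𝓝[<] X) atTop := by
  set B := (kuznetsovMeasure X Y).real univ + (kuznetsovMeasure Y X).real univ / 2
  have hlower : Tendsto (fun x => (X - x)⁻¹ / 4 + -B) (𝓝[<] X) atTop := by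
    refine tendsto_atTop_add_const_right _ _ ((tendsto_inv_nhdsGT_zero.comp
      (tendsto_nhdsWithin_iff.mpr ⟨?_, ?_⟩)).atTop_div_const (by norm_num))
    · exact (Continuous.tendsto' (by fun_prop) X 0 (sub_self X)).mono_left nhdsWithin_le_nhds
    · filter_upwards [self_mem_nhdsWithin] with x hx using sub_pos.mpr (mem_Iio.mp hx)
  refine tendsto_atTop_mono' _ ?_ hlower
  filter_upwards [Ico_mem_nhdsLT hX] with x hx
  have hsplit : (generatingDeriv X Y 0 x).re = ((laplaceMoment X Y 0 (Complex.I * x)).im -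
      (laplaceMoment X Y 0 (-Complex.I * x)).im + ((laplaceMoment Y X 0 x).re -
        (laplaceMoment Y X 0 (-x)).re)) / 2 := by
    simp [generatingDeriv, rotatedLaplace]
    ring
  have hI := norm_laplaceMoment_zero_le X hY (z := Complex.I * x) (by simp)
  have hnegI := norm_laplaceMoment_zero_le X hY (z := -Complex.I * x) (by simp)
  have hneg := norm_laplaceMoment_zero_le Y hX (z := -x) (by simpa using hx.1)
  have hpos := one_div_le_re_laplaceMoment_zero Y hX hx.2
  rw [one_div, mul_inv] at hpos
  have hI' := (abs_le.mp ((Complex.abs_im_le_norm _).trans hI)).1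
  have hnegI' := (abs_le.mp ((Complex.abs_im_le_norm _).trans hnegI)).2
  have hneg' := (abs_le.mp ((Complex.abs_re_le_norm _).trans hneg)).2
  rw [hsplit]
  simp only [B]
  linarith

end

/-! ### Inverting a solution that blows up -/

theorem setIntegral_Ioi_eq_setIntegral_Ioo {a b : ℝ} (hab : a < b) {h h' : ℝ → ℝ}
    (hh : ∀ x ∈ Ico a b, HasDerivAt h (h' x) x) (hpos : ∀ x ∈ Ioo a b, 0 < h' x)
    (htop : Tendsto h (𝓝[<] b) atTop) (F : ℝ → ℝ) :
    ∫ x in Ioi (h a), F x = ∫ x in Ioo a b, h' x * F (h x) := by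
  have hcont : ContinuousOn h (Ico a b) := fun x hx => (hh x hx).continuousAt.continuousWithinAt
  have hmono : StrictMonoOn h (Ico a b) := by
    refine strictMonoOn_of_deriv_pos (convex_Ico a b) hcont fun x hx => ?_
    rw [interior_Ico] at hx
    rw [(hh x (Ioo_subset_Ico_self hx)).deriv]
    exact hpos x hx
  have himage : h '' Ioo a b = Ioi (h a) := by
    refine Subset.antisymm ?_ fun y hy => ?_
    · rintro _ ⟨x, hx, rfl⟩
      exact hmono (left_mem_Ico.mpr hab) (Ioo_subset_Ico_self hx) hx.1
    · obtain ⟨x, hx, rfl⟩ := isPreconnected_Ico.intermediate_value_Ici (left_mem_Ico.mpr hab)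
        (le_principal_iff.mpr (Ico_mem_nhdsLT hab)) hcont htop (mem_Ici.mpr (le_of_lt hy))
      exact ⟨x, ⟨hx.1.lt_of_ne fun hax => (mem_Ioi.mp hy).ne (congrArg h hax), hx.2⟩, rfl⟩
  rw [← himage]
  exact integral_image_eq_integral_deriv_smul_of_monotoneOn measurableSet_Ioo
    (fun x hx => (hh x (Ioo_subset_Ico_self hx)).hasDerivWithinAt)
    (hmono.monotoneOn.mono Ioo_subset_Ico_self) F

theorem quartic_pos {a : ℝ} (ha : -1 < a) (x : ℝ) : 0 < x ^ 4 + 2 * a * x ^ 2 + 1 := by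
  obtain rfl | hx := eq_or_ne x 0
  · norm_num
  · nlinarith [sq_nonneg (x ^ 2 - 1), pow_pos (abs_pos.mpr hx) 2, sq_abs x]

/-- The elliptic integral `∫₀^∞ dx / √(x⁴ + 2 a x² + 1)`. -/
noncomputable def quarticIntegral (a : ℝ) : ℝ :=
  ∫ x in Ioi (0 : ℝ), (√(x ^ 4 + 2 * a * x ^ 2 + 1))⁻¹

theorem integrable_inv_sqrt_quartic {a : ℝ} (ha : -1 < a) :
    Integrable fun x : ℝ => (√(x ^ 4 + 2 * a * x ^ 2 + 1))⁻¹ := by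
  obtain ⟨c, hc, hc1, hca⟩ : ∃ c > 0, c ≤ 1 ∧ 2 * c ≤ 1 + a :=
    ⟨min 1 ((1 + a) / 2), lt_min one_pos (by linarith), min_le_left _ _,
      by linarith [min_le_right 1 ((1 + a) / 2)]⟩
  have hlower : ∀ x : ℝ, c * (1 + x ^ 2) ^ 2 ≤ x ^ 4 + 2 * a * x ^ 2 + 1 := fun x => by
    nlinarith [sq_nonneg (x ^ 2 - 1), sq_nonneg x]
  refine (integrable_inv_one_add_sq.const_mul (√c)⁻¹).mono' (by fun_prop) (.of_forall fun x => ?_)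
  have hx : 0 < 1 + x ^ 2 := by positivity
  rw [norm_inv, norm_of_nonneg (sqrt_nonneg _), ← mul_inv]
  refine inv_anti₀ (mul_pos (sqrt_pos.mpr hc) hx) (le_sqrt_of_sq_le ?_)
  rw [mul_pow, sq_sqrt hc.le]
  exact hlower x

theorem strictAntiOn_quarticIntegral : StrictAntiOn quarticIntegral (Ioi (-1)) := by
  intro a ha b hb hab
  have hint := (integrable_inv_sqrt_quartic ha).integrableOn (s := Ioi 0)
  have hint' := (integrable_inv_sqrt_quartic hb).integrableOn (s := Ioi 0)
  have hlt : ∀ x ∈ Ioi (0 : ℝ), 0 <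
      (√(x ^ 4 + 2 * a * x ^ 2 + 1))⁻¹ - (√(x ^ 4 + 2 * b * x ^ 2 + 1))⁻¹ := fun x hx => by
    have hx2 : 0 < x ^ 2 := pow_pos hx 2
    refine sub_pos.mpr (inv_strictAnti₀ (sqrt_pos.mpr (quartic_pos ha x))
      (sqrt_lt_sqrt (quartic_pos ha x).le ?_))
    gcongr
  have hsupport : (Function.support fun x : ℝ =>
      (√(x ^ 4 + 2 * a * x ^ 2 + 1))⁻¹ - (√(x ^ 4 + 2 * b * x ^ 2 + 1))⁻¹) ∩ Ioi 0 = Ioi 0 :=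
    inter_eq_right.mpr fun x hx => (hlt x hx).ne'
  rw [← sub_pos, quarticIntegral, quarticIntegral, ← integral_sub hint hint',
    setIntegral_pos_iff_support_of_nonneg_ae
      ((ae_restrict_mem measurableSet_Ioi).mono fun x hx => (hlt x hx).le) (hint.sub hint'),
    hsupport]
  simp

theorem quarticIntegral_pos {a : ℝ} (ha : -1 < a) : 0 < quarticIntegral a :=
  (integral_nonneg fun _ => inv_nonneg.mpr (sqrt_nonneg _)).trans_lt
    (strictAntiOn_quarticIntegral ha (ha.trans (lt_add_one a)) (lt_add_one a))

section blowup

variable {a c X : ℝ} {h h' : ℝ → ℝ}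

/-- If `h' ^ 2 = c ^ 2 (h ^ 2 - 1) ^ 2`, then `h ^ 2 - 1` satisfies a linear differential
inequality, so a solution which reaches `1` stays there. -/
theorem sq_eq_one_of_sq_deriv_eq {s t : ℝ} (hh : ∀ x ∈ Icc s t, HasDerivAt h (h' x) x)
    (hsq : ∀ x ∈ Icc s t, h' x ^ 2 = c ^ 2 * (h x ^ 2 - 1) ^ 2) (hs : h s ^ 2 = 1) (hst : s ≤ t) :
    h t ^ 2 = 1 := by
  obtain ⟨B, hB⟩ := isCompact_Icc.exists_bound_of_continuousOn (f := h) (s := Icc s t)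
    fun x hx => (hh x hx).continuousAt.continuousWithinAt
  have hderiv : ∀ x ∈ Icc s t, HasDerivAt (fun x => h x ^ 2 - 1) (2 * h x * h' x) x := fun x hx =>
    (((hh x hx).fun_pow 2).sub_const 1).congr_deriv (by push_cast; ring)
  refine sub_eq_zero.mp (eq_zero_of_abs_deriv_le_mul_abs_self_of_eq_zero_right
    (K := 2 * B * |c|) (fun x hx => (hderiv x hx).continuousAt.continuousWithinAt)
    (fun x hx => (hderiv x (Ico_subset_Icc_self hx)).hasDerivWithinAt) (by rw [hs, sub_self])
    (fun x hx => ?_) t ⟨hst, le_rfl⟩)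
  have hx := Ico_subset_Icc_self hx
  have habs : |h' x| = |c| * |h x ^ 2 - 1| := by
    rw [← abs_mul, ← sq_eq_sq_iff_abs_eq_abs, hsq x hx, mul_pow]
  rw [norm_mul, norm_mul, norm_two, norm_eq_abs (h' x), habs, mul_assoc _ |c|]
  exact mul_le_mul_of_nonneg_right (mul_le_mul_of_nonneg_left (hB x hx) zero_le_two)
    (by positivity)

variable (hX : 0 < X) (hh : ∀ x ∈ Ico 0 X, HasDerivAt h (h' x) x)
  (hsq : ∀ x ∈ Ico 0 X, h' x ^ 2 = c ^ 2 * (h x ^ 4 + 2 * a * h x ^ 2 + 1))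
  (hzero : h 0 = 0) (htop : Tendsto h (𝓝[<] X) atTop)

include hX hh hsq hzero htop

/-- If `a ≤ -1`, the quartic is nonpositive at `h = √(-a)`, which forces `a = -1`. -/
theorem neg_one_lt_of_tendsto_atTop (hc : c ≠ 0) : -1 < a := by
  by_contra! ha
  have hcont : ContinuousOn h (Ico 0 X) := fun x hx => (hh x hx).continuousAt.continuousWithinAt
  obtain ⟨s, hs, hhs⟩ := isPreconnected_Ico.intermediate_value_Ici (left_mem_Ico.mpr hX)
    (le_principal_iff.mpr (Ico_mem_nhdsLT hX)) hcont htop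
    (show √(-a) ∈ Ici (h 0) by rw [hzero]; exact sqrt_nonneg _)
  have hhs2 : h s ^ 2 = -a := by rw [hhs, sq_sqrt (by linarith)]
  have hquartic : 0 ≤ h s ^ 4 + 2 * a * h s ^ 2 + 1 :=
    nonneg_of_mul_nonneg_right ((sq_nonneg (h' s)).trans_eq (hsq s hs)) (by positivity)
  have ha1 : a = -1 := by
    rw [show h s ^ 4 = (h s ^ 2) ^ 2 by ring, hhs2] at hquartic
    nlinarith
  obtain ⟨t, ht, hst⟩ := ((htop.eventually_gt_atTop 1).and (Ico_mem_nhdsLT hs.2)).exists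
  have hsub : Icc s t ⊆ Ico 0 X := fun x hx => ⟨hs.1.trans hx.1, hx.2.trans_lt hst.2⟩
  have := sq_eq_one_of_sq_deriv_eq (c := c) (fun x hx => hh x (hsub hx))
    (fun x hx => by rw [hsq x (hsub hx), ha1]; ring) (by rw [hhs2, ha1, neg_neg]) hst.1
  nlinarith

theorem quarticIntegral_eq_of_tendsto_atTop (hc : 0 < c) (hpos : 0 < h' 0) :
    quarticIntegral a = c * X := by
  have ha := neg_one_lt_of_tendsto_atTop hX hh hsq hzero htop hc.ne'
  have hne : ∀ x ∈ Ico 0 X, h' x ≠ 0 := fun x hx hx0 => by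
    have := hsq x hx
    rw [hx0, zero_pow two_ne_zero] at this
    exact (mul_pos (pow_pos hc 2) (quartic_pos ha (h x))).ne this
  have hderiv : ∀ x ∈ Ico 0 X, 0 < h' x :=
    (hasDerivWithinAt_forall_lt_or_forall_gt_of_forall_ne (convex_Ico 0 X)
      (fun x hx => (hh x hx).hasDerivWithinAt) hne).resolve_left
      fun hneg => hpos.not_gt (hneg 0 (left_mem_Ico.mpr hX))
  have hone : ∀ x ∈ Ioo 0 X, h' x * (√(h x ^ 4 + 2 * a * h x ^ 2 + 1))⁻¹ = c := fun x hx => by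
    have hx := Ioo_subset_Ico_self hx
    have hroot : √(h x ^ 4 + 2 * a * h x ^ 2 + 1) = h' x / c := by
      rw [← sqrt_sq (div_pos (hderiv x hx) hc).le, div_pow, hsq x hx,
        mul_div_cancel_left₀ _ (pow_pos hc 2).ne']
    rw [hroot, inv_div, mul_div_cancel₀ _ (hne x hx)]
  rw [quarticIntegral, ← hzero, setIntegral_Ioi_eq_setIntegral_Ioo hX hh
    (fun x hx => hderiv x (Ioo_subset_Ico_self hx)) htop, setIntegral_congr_fun measurableSet_Ioo
    hone]
  simp [hX.le, mul_comm]

end blowup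

/-! ### Identification of the constants -/

section

variable {X Y : ℝ} (hX : 0 < X) (hY : 0 < Y)

include hX hY

theorem sq_re_generatingDeriv_one {x : ℝ} (hx : x ∈ Ioo (-X) X) :
    (generatingDeriv X Y 1 x).re ^ 2 = (generatingDeriv X Y 0 x).re ^ 4 +
      2 * odeCoeff X Y * (generatingDeriv X Y 0 x).re ^ 2 + momentSum X Y 0 ^ 2 := by
  refine eqOn_of_hasDerivAt isOpen_Ioo isPreconnected_Ioo (z := 0)
    (f := fun x : ℝ => (generatingDeriv X Y 1 x).re ^ 2)
    (g := fun x : ℝ => (generatingDeriv X Y 0 x).re ^ 4 +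
      2 * odeCoeff X Y * (generatingDeriv X Y 0 x).re ^ 2 + momentSum X Y 0 ^ 2)
    (fun x hx => (hasDerivAt_re_generatingDeriv hX hY 1 hx).fun_pow 2) (fun x hx => ?_)
    ⟨neg_lt_zero.mpr hX, hX⟩ ?_ hx
  · have h := hasDerivAt_re_generatingDeriv hX hY 0 hx
    refine (((h.fun_pow 4).fun_add ((h.fun_pow 2).const_mul _)).add_const _).congr_deriv ?_
    rw [one_add_one_eq_two, re_generatingDeriv_two_eq hX hY hx]
    push_cast
    ring
  · simp [generatingDeriv_even_zero X Y 0, generatingDeriv_odd_zero X Y 0]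

theorem quarticIntegral_odeCoeff_div :
    -1 < odeCoeff X Y / momentSum X Y 0 ∧
      quarticIntegral (odeCoeff X Y / momentSum X Y 0) = √(momentSum X Y 0) * X := by
  set m := momentSum X Y 0 with hm_def
  have hm : 0 < m := momentSum_zero_pos hX hY
  have hsqrt := sqrt_pos.mpr hm
  have hsub : Ico 0 X ⊆ Ioo (-X) X := Ico_subset_Ioo_left (neg_lt_zero.mpr hX)
  have hderiv : ∀ x ∈ Ico 0 X, HasDerivAt (fun x : ℝ => (generatingDeriv X Y 0 x).re / √m)
      ((generatingDeriv X Y 1 x).re / √m) x := fun x hx =>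
    (hasDerivAt_re_generatingDeriv hX hY 0 (hsub hx)).div_const _
  have hsq : ∀ x ∈ Ico 0 X, ((generatingDeriv X Y 1 x).re / √m) ^ 2 =
      √m ^ 2 * (((generatingDeriv X Y 0 x).re / √m) ^ 4 +
        2 * (odeCoeff X Y / m) * ((generatingDeriv X Y 0 x).re / √m) ^ 2 + 1) := fun x hx => by
    rw [div_pow, sq_re_generatingDeriv_one hX hY (hsub hx), ← hm_def, div_pow, div_pow,
      show √m ^ 4 = (√m ^ 2) ^ 2 by ring, sq_sqrt hm.le]
    field_simp
  have hzero : (generatingDeriv X Y 0 (0 : ℝ)).re / √m = 0 := by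
    simp [generatingDeriv_even_zero X Y 0]
  have htop := (tendsto_re_generatingDeriv_zero hX hY).atTop_div_const hsqrt
  refine ⟨neg_one_lt_of_tendsto_atTop hX hderiv hsq hzero htop hsqrt.ne',
    quarticIntegral_eq_of_tendsto_atTop hX hderiv hsq hzero htop hsqrt ?_⟩
  rw [Complex.ofReal_zero, show 1 = 2 * 0 + 1 from rfl, generatingDeriv_odd_zero, pow_zero, one_mul,
    Complex.ofReal_re]
  exact div_pos hm hsqrt

end

section

variable {k : ℝ} (hk : k ^ 2 < 1)

/-- The factor `√(1 - k² sin² θ)` in Legendre's form of the elliptic integrals. -/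
noncomputable def legendreDelta (k θ : ℝ) : ℝ := √(1 - k ^ 2 * sin θ ^ 2)

include hk

theorem one_sub_sq_mul_sin_sq_pos (θ : ℝ) : 0 < 1 - k ^ 2 * sin θ ^ 2 :=
  sub_pos.mpr (mul_lt_one_of_nonneg_of_lt_one_left (sq_nonneg k) hk (sin_sq_le_one θ))

theorem legendreDelta_pos (θ : ℝ) : 0 < legendreDelta k θ :=
  sqrt_pos.mpr (one_sub_sq_mul_sin_sq_pos hk θ)

theorem legendreDelta_sq (θ : ℝ) : legendreDelta k θ ^ 2 = 1 - k ^ 2 * sin θ ^ 2 :=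
  sq_sqrt (one_sub_sq_mul_sin_sq_pos hk θ).le

theorem ellipticK_eq_setIntegral_inv_legendreDelta :
    ellipticK k = ∫ θ in Ioo 0 (π / 2), (legendreDelta k θ)⁻¹ := by
  rw [ellipticK, intervalIntegral.integral_of_le (by positivity), integral_Ioc_eq_integral_Ioo]
  refine setIntegral_congr_fun measurableSet_Ioo fun θ _ => ?_
  rw [rpow_neg (one_sub_sq_mul_sin_sq_pos hk θ).le, ← sqrt_eq_rpow, legendreDelta]

theorem hasDerivAt_legendreDelta (θ : ℝ) :
    HasDerivAt (legendreDelta k) (-(k ^ 2 * sin θ * cos θ) / legendreDelta k θ) θ := by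
  refine (HasDerivAt.sqrt ((((hasDerivAt_sin θ).fun_pow 2).const_mul (k ^ 2)).const_sub 1)
    (one_sub_sq_mul_sin_sq_pos hk θ).ne').congr_deriv ?_
  rw [← mul_div_mul_left _ (legendreDelta k θ) two_ne_zero, legendreDelta]
  push_cast
  ring

theorem hasDerivAt_tan_mul_legendreDelta {θ : ℝ} (hθ : cos θ ≠ 0) :
    HasDerivAt (fun θ => tan θ * legendreDelta k θ)
      ((1 - k ^ 2 + k ^ 2 * cos θ ^ 4) / (cos θ ^ 2 * legendreDelta k θ)) θ := by
  have hΔ := (legendreDelta_pos hk θ).ne'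
  refine ((hasDerivAt_tan hθ).mul (hasDerivAt_legendreDelta hk θ)).congr_deriv ?_
  rw [tan_eq_sin_div_cos]
  field_simp
  rw [legendreDelta_sq hk]
  linear_combination (-k ^ 2 * (1 + cos θ ^ 2)) * sin_sq_add_cos_sq θ

theorem quartic_tan_mul_legendreDelta {θ : ℝ} (hθ : cos θ ≠ 0) :
    (tan θ * legendreDelta k θ) ^ 4 + 2 * (1 - 2 * k ^ 2) * (tan θ * legendreDelta k θ) ^ 2 + 1 =
      ((1 - k ^ 2 + k ^ 2 * cos θ ^ 4) / cos θ ^ 2) ^ 2 := by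
  rw [show (tan θ * legendreDelta k θ) ^ 4 = ((tan θ * legendreDelta k θ) ^ 2) ^ 2 by ring,
    mul_pow, legendreDelta_sq hk, tan_eq_sin_div_cos, div_pow, sin_sq θ]
  field_simp
  ring

/-- The substitution `x = tan θ √(1 - k² sin² θ)`. -/
theorem quarticIntegral_one_sub_two_mul_sq : quarticIntegral (1 - 2 * k ^ 2) = ellipticK k := by
  have hcos : ∀ θ ∈ Ico 0 (π / 2), 0 < cos θ := fun θ hθ =>
    cos_pos_of_mem_Ioo ⟨(neg_lt_zero.mpr pi_div_two_pos).trans_le hθ.1, hθ.2⟩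
  have hN : ∀ θ : ℝ, 0 < 1 - k ^ 2 + k ^ 2 * cos θ ^ 4 := fun θ =>
    add_pos_of_pos_of_nonneg (sub_pos.mpr hk) (by positivity)
  have htop : Tendsto (fun θ => tan θ * legendreDelta k θ) (𝓝[<] (π / 2)) atTop :=
    tendsto_tan_pi_div_two.atTop_mul_pos (legendreDelta_pos hk _)
      ((hasDerivAt_legendreDelta hk _).continuousAt.tendsto.mono_left nhdsWithin_le_nhds)
  have hsubst := setIntegral_Ioi_eq_setIntegral_Ioo pi_div_two_pos
    (fun θ hθ => hasDerivAt_tan_mul_legendreDelta hk (hcos θ hθ).ne')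
    (fun θ hθ => div_pos (hN θ) (mul_pos (pow_pos (hcos θ (Ioo_subset_Ico_self hθ)) 2)
      (legendreDelta_pos hk θ))) htop fun x => (√(x ^ 4 + 2 * (1 - 2 * k ^ 2) * x ^ 2 + 1))⁻¹
  rw [tan_zero, zero_mul] at hsubst
  rw [quarticIntegral, hsubst, ellipticK_eq_setIntegral_inv_legendreDelta hk]
  refine setIntegral_congr_fun measurableSet_Ioo fun θ hθ => ?_
  have hθ := hcos θ (Ioo_subset_Ico_self hθ)
  have hNθ := hN θ
  have hΔ := (legendreDelta_pos hk θ).ne'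
  rw [quartic_tan_mul_legendreDelta hk hθ.ne', sqrt_sq (by positivity)]
  field_simp

theorem ellipticK_pos : 0 < ellipticK k := by
  rw [← quarticIntegral_one_sub_two_mul_sq hk]
  exact quarticIntegral_pos (by linarith)

end

/-- A decreasing function determines a point `a` by the ratio of its values at `a` and `-a`. -/
theorem eq_of_strictAntiOn_of_eq_mul {R : Type*} [Field R] [LinearOrder R] [IsStrictOrderedRing R]
    {F : R → R} {t : Set R} (hF : StrictAntiOn F t) {a b s : R} (ha : a ∈ t) (hna : -a ∈ t)
    (hb : b ∈ t) (hnb : -b ∈ t) (hFa : 0 < F a) (hFna : 0 < F (-a)) (hsb : F b = s * F a)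
    (hsnb : F (-b) = s * F (-a)) : b = a := by
  rcases lt_trichotomy b a with h | h | h
  · have hs := hF hb ha h
    have hs' := hF hna hnb (neg_lt_neg h)
    rw [hsb, lt_mul_iff_one_lt_left hFa] at hs
    rw [hsnb, mul_lt_iff_lt_one_left hFna] at hs'
    exact absurd hs hs'.not_gt
  · exact h
  · have hs := hF ha hb h
    have hs' := hF hnb hna (neg_lt_neg h)
    rw [hsb, mul_lt_iff_lt_one_left hFa] at hs
    rw [hsnb, lt_mul_iff_one_lt_left hFna] at hs'
    exact absurd hs hs'.not_gt

theorem odeCoeff_and_momentSum_quarticIntegral {a : ℝ} (ha : -1 < a) (hna : -1 < -a) :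
    odeCoeff (quarticIntegral a) (quarticIntegral (-a)) = a ∧
      momentSum (quarticIntegral a) (quarticIntegral (-a)) 0 = 1 := by
  have hX := quarticIntegral_pos ha
  have hY := quarticIntegral_pos hna
  obtain ⟨hb, hXb⟩ := quarticIntegral_odeCoeff_div hX hY
  obtain ⟨hnb, hYb⟩ := quarticIntegral_odeCoeff_div hY hX
  rw [odeCoeff_swap, momentSum_swap, pow_zero, one_mul, neg_div] at hnb hYb
  have hcoeff := eq_of_strictAntiOn_of_eq_mul strictAntiOn_quarticIntegral ha hna hb hnb hX hY hXb
    hYb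
  rw [hcoeff, right_eq_mul₀ hX.ne', sqrt_eq_one] at hXb
  rw [hXb, div_one] at hcoeff
  exact ⟨hcoeff, hXb⟩

theorem odeCoeff_and_momentSum_ellipticK {k : ℝ} (hk : k ∈ Ioo (0 : ℝ) 1) :
    odeCoeff (ellipticK k) (ellipticK √(1 - k ^ 2)) = 1 - 2 * k ^ 2 ∧
      momentSum (ellipticK k) (ellipticK √(1 - k ^ 2)) 0 = 1 := by
  have hk0 : 0 < k ^ 2 := pow_pos hk.1 2
  have hk1 : k ^ 2 < 1 := pow_lt_one₀ hk.1.le hk.2 two_ne_zero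
  have hsq : √(1 - k ^ 2) ^ 2 = 1 - k ^ 2 := sq_sqrt (sub_pos.mpr hk1).le
  rw [← quarticIntegral_one_sub_two_mul_sq hk1,
    ← quarticIntegral_one_sub_two_mul_sq (k := √(1 - k ^ 2)) (by linarith), hsq,
    show 1 - 2 * (1 - k ^ 2) = -(1 - 2 * k ^ 2) by ring]
  exact odeCoeff_and_momentSum_quarticIntegral (by linarith) (by linarith)

/-! ### The two recurrences -/

theorem integral_pow_div_cos_add_cosh (X : ℝ) {Y : ℝ} (hY : Y ≠ 0) (n : ℕ) :
    ∫ x in Ioi (0 : ℝ), x ^ n / (cos (X * √x) + cosh (Y * √x)) =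
      2 * kuznetsovMoment X Y (2 * n + 1) := by
  rw [← integral_comp_rpow_Ioi_of_pos (p := 2)
    (g := fun x => x ^ n / (cos (X * √x) + cosh (Y * √x))) two_pos, kuznetsovMoment,
    integral_kuznetsovMeasure X hY, ← integral_const_mul]
  refine setIntegral_congr_fun measurableSet_Ioi fun y hy => ?_
  have hsqrt : √(y ^ 2) = y := sqrt_sq (le_of_lt hy)
  have hone : y ^ ((2 : ℝ) - 1) = y := by norm_num
  simp only [rpow_two, hone, hsqrt, kuznetsovWeight, smul_eq_mul]
  ring

theorem Iplus_eq_momentSum {k : ℝ} (hk : ellipticK k ≠ 0) (hk' : ellipticK √(1 - k ^ 2) ≠ 0)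
    (n : ℕ) : Iplus k n = momentSum (ellipticK k) (ellipticK √(1 - k ^ 2)) n := by
  simp only [Iplus, add_comm (cosh (ellipticK k * _)), integral_pow_div_cos_add_cosh _ hk,
    integral_pow_div_cos_add_cosh _ hk', momentSum]
  ring

theorem cast_choose_sub_cast_choose {R : Type*} [Ring R] {j n : ℕ} (hj : j ≤ n) :
    ((2 * n + 3).choose (2 * (n - j)) - (2 * n + 3).choose (2 * (j + 2)) : R) =
      2 * (2 * n + 3).choose (2 * j + 3) - (2 * n + 4).choose (2 * j + 4) := by
  have hsymm : (2 * n + 3).choose (2 * (n - j)) = (2 * n + 3).choose (2 * j + 3) :=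
    Nat.choose_symm_of_eq_add (by omega)
  have hpascal : (2 * n + 4).choose (2 * j + 4) =
      (2 * n + 3).choose (2 * j + 3) + (2 * n + 3).choose (2 * j + 4) :=
    Nat.choose_succ_succ' _ _
  rw [hsymm, hpascal, show 2 * (j + 2) = 2 * j + 4 from rfl, Nat.cast_add,
    two_mul (Nat.cast _), add_sub_add_left_eq_sub]

/-- In `∑ i ≤ n + 2, (e (n + 2 - i) - e i) * I i * I (n + 2 - i)` with `e i = C(2n+3, 2i)` the
coefficients are antisymmetric under `i ↦ n + 2 - i`, so the sum vanishes. -/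
theorem zero_mul_add_two_eq_sum_choose {R : Type*} [CommRing R] (I : ℕ → R) (n : ℕ) :
    I 0 * I (n + 2) = -(n * (2 * n + 3) * I 1 * I (n + 1)) + ∑ j ∈ Finset.range (n + 1),
      (2 * ((2 * n + 3).choose (2 * j + 3) : R) - ((2 * n + 4).choose (2 * j + 4) : R)) *
        I (j + 2) * I (n - j) := by
  set e : ℕ → R := fun i => (2 * n + 3).choose (2 * i)
  have hsum : ∑ i ∈ Finset.range (n + 3), (e (n + 2 - i) - e i) * (I i * I (n + 2 - i)) = 0 := by
    simp only [sub_mul, Finset.sum_sub_distrib]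
    rw [sub_eq_zero, ← Finset.sum_range_reflect (fun i => e i * (I i * I (n + 2 - i)))]
    refine Finset.sum_congr rfl fun i hi => ?_
    have hi := Finset.mem_range.mp hi
    rw [show n + 3 - 1 - i = n + 2 - i by omega, show n + 2 - (n + 2 - i) = i by omega]
    ring
  have hzero : e (n + 2) - e 0 = -1 := by
    simp [e, Nat.choose_eq_zero_of_lt (show 2 * n + 3 < 2 * (n + 2) by omega)]
  have hone : e (n + 1) - e 1 = -(n * (2 * n + 3)) := by
    have htwo : (2 * n + 3).choose 2 = (2 * n + 3) * (n + 1) := by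
      rw [Nat.choose_two_right, show 2 * n + 3 - 1 = (n + 1) * 2 by omega, ← mul_assoc,
        Nat.mul_div_cancel _ two_pos]
    simp only [e, show 2 * (n + 1) = 2 * n + 2 from rfl, mul_one, htwo,
      Nat.choose_succ_self_right (2 * n + 2)]
    push_cast
    ring
  rw [Finset.sum_range_succ', Finset.sum_range_succ'] at hsum
  simp only [Nat.sub_zero, zero_add, Nat.add_sub_add_right, add_assoc, Nat.reduceAdd] at hsum
  rw [hzero, show n + 2 - 1 = n + 1 from rfl, hone, Finset.sum_congr rfl fun j hj => by
    rw [cast_choose_sub_cast_choose (Finset.mem_range_succ_iff.mp hj), ← mul_assoc]] at hsum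
  linear_combination -hsum

theorem sum_range_two_mul_of_odd_eq_zero {M : Type*} [AddCommMonoid M] {f : ℕ → M}
    (hf : ∀ j, f (2 * j + 1) = 0) (n : ℕ) :
    ∑ i ∈ Finset.range (2 * n), f i = ∑ j ∈ Finset.range n, f (2 * j) := by
  induction n with
  | zero => rfl
  | succ n ih => simp only [Nat.mul_succ, Finset.sum_range_succ, ih, hf, add_zero]

/-- The convolution which expresses the odd Taylor coefficients of the cube of an odd function
through the odd Taylor coefficients `c` of the function, up to a factor `6`. -/
def oddCubeConvolution {R : Type*} [Semiring R] (c : ℕ → R) (n : ℕ) : R :=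
  ∑ j ∈ Finset.range (n + 1), ((2 * n + 2).choose (2 * j) : R) * c j *
    ∑ l ∈ Finset.range (n - j + 1), ((2 * n - 2 * j + 1).choose (2 * l) : R) * c l * c (n - j - l)

theorem oddCubeConvolution_pow_mul {R : Type*} [CommSemiring R] (s : R) (c : ℕ → R) (n : ℕ) :
    oddCubeConvolution (fun j => s ^ j * c j) n = s ^ n * oddCubeConvolution c n := by
  simp only [oddCubeConvolution, Finset.mul_sum]
  refine Finset.sum_congr rfl fun j hj => Finset.sum_congr rfl fun l hl => ?_
  have hj := Finset.mem_range.mp hj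
  have hl := Finset.mem_range.mp hl
  have hs : s ^ n = s ^ j * s ^ l * s ^ (n - j - l) := by
    rw [← pow_add, ← pow_add, show j + l + (n - j - l) = n by omega]
  rw [hs]
  ring

theorem map_oddCubeConvolution {R S : Type*} [Semiring R] [Semiring S] (g : R →+* S) (c : ℕ → R)
    (n : ℕ) : g (oddCubeConvolution c n) = oddCubeConvolution (fun j => g (c j)) n := by
  simp only [oddCubeConvolution, map_sum, map_mul, map_natCast]

section

variable {𝕜 : Type*} [NontriviallyNormedField 𝕜] [CompleteSpace 𝕜] {f : 𝕜 → 𝕜} {x : 𝕜}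
  (hf : AnalyticAt 𝕜 f x)

include hf

theorem iteratedDeriv_succ_pow_succ (p n : ℕ) :
    iteratedDeriv (n + 1) (fun z => f z ^ (p + 1)) x = (p + 1) * ∑ i ∈ Finset.range (n + 1),
      n.choose i * iteratedDeriv (i + 1) f x * iteratedDeriv (n - i) (fun z => f z ^ p) x := by
  have hderiv : deriv (fun z => f z ^ (p + 1)) =ᶠ[𝓝 x]
      fun z => (p + 1) * (deriv f z * f z ^ p) := by
    filter_upwards [hf.eventually_analyticAt] with z hz
    rw [(hz.differentiableAt.hasDerivAt.fun_pow (p + 1)).deriv, Nat.add_sub_cancel]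
    push_cast
    ring
  simp only [iteratedDeriv_succ', hderiv.iteratedDeriv_eq, iteratedDeriv_const_mul_field,
    iteratedDeriv_fun_mul hf.deriv.contDiffAt (hf.fun_pow p).contDiffAt]

variable (heven : ∀ m, iteratedDeriv (2 * m) f x = 0)

include heven

theorem iteratedDeriv_two_mul_add_two_sq (n : ℕ) :
    iteratedDeriv (2 * n + 2) (fun z => f z ^ 2) x = 2 * ∑ l ∈ Finset.range (n + 1),
      (2 * n + 1).choose (2 * l) * iteratedDeriv (2 * l + 1) f x *
        iteratedDeriv (2 * (n - l) + 1) f x := by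
  rw [iteratedDeriv_succ_pow_succ hf 1, show 2 * n + 1 + 1 = 2 * (n + 1) from rfl,
    sum_range_two_mul_of_odd_eq_zero fun j => by
      rw [show 2 * j + 1 + 1 = 2 * (j + 1) from rfl, heven, mul_zero, zero_mul]]
  simp only [pow_one, Nat.cast_one, one_add_one_eq_two]
  refine congrArg _ (Finset.sum_congr rfl fun l hl => ?_)
  have hl := Finset.mem_range.mp hl
  rw [show 2 * n + 1 - 2 * l = 2 * (n - l) + 1 by omega]

theorem iteratedDeriv_two_mul_add_three_cube (n : ℕ) :
    iteratedDeriv (2 * n + 3) (fun z => f z ^ 3) x =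
      6 * oddCubeConvolution (fun j => iteratedDeriv (2 * j + 1) f x) n := by
  have hzero : f x = 0 := by simpa using heven 0
  rw [iteratedDeriv_succ_pow_succ hf 2, Finset.sum_range_succ, Nat.sub_self, iteratedDeriv_zero,
    hzero, zero_pow two_ne_zero, mul_zero, add_zero, show 2 * n + 2 = 2 * (n + 1) from rfl,
    sum_range_two_mul_of_odd_eq_zero fun j => by
      rw [show 2 * j + 1 + 1 = 2 * (j + 1) from rfl, heven, mul_zero, zero_mul],
    oddCubeConvolution, Finset.mul_sum, Finset.mul_sum]
  refine Finset.sum_congr rfl fun j hj => ?_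
  have hj := Finset.mem_range.mp hj
  rw [show 2 * (n + 1) - 2 * j = 2 * (n - j) + 2 by omega,
    iteratedDeriv_two_mul_add_two_sq hf heven, show 2 * n - 2 * j = 2 * (n - j) by omega,
    show 2 * (n + 1) = 2 * n + 2 from rfl]
  push_cast
  ring

theorem iteratedDeriv_eq_oddCubeConvolution_of_ode {a : 𝕜}
    (hode : iteratedDeriv 2 f =ᶠ[𝓝 x] fun z => 2 * f z ^ 3 + 2 * a * f z) (n : ℕ) :
    iteratedDeriv (2 * n + 5) f x = 2 * a * iteratedDeriv (2 * n + 3) f x +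
      12 * oddCubeConvolution (fun j => iteratedDeriv (2 * j + 1) f x) n := by
  have hcomp : iteratedDeriv (2 * n + 5) f = iteratedDeriv (2 * n + 3) (iteratedDeriv 2 f) := by
    simp only [iteratedDeriv_eq_iterate, ← Function.iterate_add_apply]
  rw [hcomp, hode.iteratedDeriv_eq, iteratedDeriv_fun_add
    (contDiffAt_const.mul (hf.fun_pow 3).contDiffAt) (contDiffAt_const.mul hf.contDiffAt),
    iteratedDeriv_const_mul_field, iteratedDeriv_const_mul_field,
    iteratedDeriv_two_mul_add_three_cube hf heven]
  ring

end

section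

variable {X Y : ℝ} (hX : 0 < X) (hY : 0 < Y)

include hX hY

theorem iteratedDeriv_generatingDeriv_zero (n : ℕ) :
    EqOn (iteratedDeriv n (generatingDeriv X Y 0)) (generatingDeriv X Y n) (rectangle X Y) := by
  induction n with
  | zero => exact fun u _ => congrFun iteratedDeriv_zero u
  | succ n ih =>
    intro u hu
    rw [iteratedDeriv_succ, (ih.eventuallyEq_of_mem ((isOpen_rectangle X Y).mem_nhds hu)).deriv_eq,
      (hasDerivAt_generatingDeriv hX hY n hu).deriv]

theorem momentSum_one : momentSum X Y 1 = -2 * odeCoeff X Y * momentSum X Y 0 := by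
  have hm := (momentSum_zero_pos hX hY).ne'
  rw [odeCoeff]
  field_simp

theorem momentSum_add_two (n : ℕ) :
    momentSum X Y (n + 2) = -2 * odeCoeff X Y * momentSum X Y (n + 1) +
      12 * oddCubeConvolution (momentSum X Y) n := by
  have hzero := zero_mem_rectangle hX hY
  have hnhds := (isOpen_rectangle X Y).mem_nhds hzero
  have hiter := iteratedDeriv_generatingDeriv_zero hX hY
  have hanalytic : AnalyticAt ℂ (generatingDeriv X Y 0) 0 :=
    DifferentiableOn.analyticAt (fun u hu =>
      (hasDerivAt_generatingDeriv hX hY 0 hu).differentiableAt.differentiableWithinAt) hnhds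
  have hodd : ∀ m, iteratedDeriv (2 * m + 1) (generatingDeriv X Y 0) 0 =
      (-1) ^ m * momentSum X Y m := fun m => by
    rw [hiter _ hzero, generatingDeriv_odd_zero]
  have heven : ∀ m, iteratedDeriv (2 * m) (generatingDeriv X Y 0) 0 = 0 := fun m => by
    rw [hiter _ hzero, generatingDeriv_even_zero]
  have hode : iteratedDeriv 2 (generatingDeriv X Y 0) =ᶠ[𝓝 0] fun u =>
      2 * generatingDeriv X Y 0 u ^ 3 + 2 * odeCoeff X Y * generatingDeriv X Y 0 u := by
    filter_upwards [hnhds] with u hu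
    rw [hiter 2 hu, generatingDeriv_two_eq hX hY hu]
  have h := iteratedDeriv_eq_oddCubeConvolution_of_ode hanalytic heven hode n
  rw [show 2 * n + 5 = 2 * (n + 2) + 1 from rfl, show 2 * n + 3 = 2 * (n + 1) + 1 from rfl] at h
  simp only [hodd, oddCubeConvolution_pow_mul, ← Complex.ofRealHom_eq_coe] at h
  rw [← map_oddCubeConvolution] at h
  have hsign : (-1 : ℂ) ^ n * (-1) ^ n = 1 := pow_mul_pow_eq_one n (by norm_num)
  apply Complex.ofReal_injective
  push_cast
  simp only [Complex.ofRealHom_eq_coe] at h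
  linear_combination (-1) ^ n * h - (momentSum X Y (n + 2) +
    2 * odeCoeff X Y * momentSum X Y (n + 1) -
    12 * (oddCubeConvolution (momentSum X Y) n : ℝ)) * hsign

end

theorem Iplus_recurrences (k : ℝ) (hk : k ∈ Set.Ioo (0 : ℝ) 1) (n : ℕ) :
    (Iplus k (n + 2) =
      2 * n * (2 * n + 3) * (1 - 2 * k ^ 2) * Iplus k (n + 1) +
        ∑ j ∈ Finset.range (n + 1),
          (2 * (Nat.choose (2 * n + 3) (2 * j + 3) : ℝ) -
            (Nat.choose (2 * n + 4) (2 * j + 4) : ℝ)) * Iplus k (j + 2) * Iplus k (n - j)) ∧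
    (Iplus k (n + 2) =
      -2 * (1 - 2 * k ^ 2) * Iplus k (n + 1) +
        12 * ∑ j ∈ Finset.range (n + 1),
          (Nat.choose (2 * n + 2) (2 * j) : ℝ) * Iplus k j *
            ∑ l ∈ Finset.range (n - j + 1),
              (Nat.choose (2 * n - 2 * j + 1) (2 * l) : ℝ) * Iplus k l * Iplus k (n - j - l)) := by
  have hk1 : k ^ 2 < 1 := pow_lt_one₀ hk.1.le hk.2 two_ne_zero
  have hk' : √(1 - k ^ 2) ^ 2 < 1 := by
    rw [sq_sqrt (sub_pos.mpr hk1).le]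
    exact sub_lt_self 1 (pow_pos hk.1 2)
  have hK := ellipticK_pos hk1
  have hK' := ellipticK_pos hk'
  obtain ⟨hcoeff, hzero⟩ := odeCoeff_and_momentSum_ellipticK hk
  have hone := momentSum_one hK hK'
  simp only [Iplus_eq_momentSum hK.ne' hK'.ne']
  constructor
  · have h := zero_mul_add_two_eq_sum_choose (momentSum (ellipticK k) (ellipticK √(1 - k ^ 2))) n
    rw [hzero, hone, hcoeff, hzero] at h
    linear_combination h
  · rw [← hcoeff]
    exact momentSum_add_two hK hK' n
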